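/- arXiv:1307.5019 — 2 statements merged into one kernel-verified Lean document; each statement's English description precedes it below -/
import Mathlib

section
/- Let λ > 0. There exists a constant C = C(λ, σ) > 0 such that for the function C_σ^λ(x) = lim_{ε→0⁺} ∫_{y>0, ε≤|x−y|≤1} K_σ^λ(x,y)(x−y) dy (which exists for every x > 0): if σ = 1/2 then |C_{1/2}^λ(x)| ≤ C (1 + 1_{(0,1)}(x) |ln x|) for all x > 0, and if 1/2 < σ < 1 then |C_σ^λ(x)| ≤ C x^{1−2σ} for all x > 0. -/
open Real MeasureTheory Set Filter

noncomputable section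

/-- The modified Bessel function of the first kind `I_ν(z)`. -/
def besselI (ν z : ℝ) : ℝ :=
  ∑' k : ℕ, (z / 2) ^ (2 * (k : ℝ) + ν) / ((Nat.factorial k : ℝ) * Real.Gamma ((k : ℝ) + ν + 1))

/-- The Bessel heat kernel `W_t^λ(x,y)`. -/
def besselHeatKernel (lam t x y : ℝ) : ℝ :=
  Real.sqrt (x * y) / (2 * t) * besselI (lam - 1 / 2) (x * y / (2 * t)) *
    Real.exp (-(x ^ 2 + y ^ 2) / (4 * t))

/-- The Bessel–Poisson kernel `P_t^λ(x,y)`, obtained by subordination. -/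
def besselPoissonKernel (lam t x y : ℝ) : ℝ :=
  t / (2 * Real.sqrt Real.pi) *
    ∫ s in Set.Ioi (0 : ℝ),
      s ^ (-(3 : ℝ) / 2) * Real.exp (-t ^ 2 / (4 * s)) * besselHeatKernel lam s x y

/-- The Bessel heat semigroup `W_t^λ u (x)`. -/
def heatSemigroup (lam : ℝ) (u : ℝ → ℝ) (t x : ℝ) : ℝ :=
  ∫ y in Set.Ioi (0 : ℝ), besselHeatKernel lam t x y * u y

/-- The Bessel–Poisson semigroup `P_t^λ f (x)`. -/
def poissonSemigroup (lam : ℝ) (f : ℝ → ℝ) (t x : ℝ) : ℝ :=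
  ∫ y in Set.Ioi (0 : ℝ), besselPoissonKernel lam t x y * f y

/-- The set of Hölder quotients of `f` on `(0,∞)`. -/
def holderRatioSet (α : ℝ) (f : ℝ → ℝ) : Set ℝ :=
  {r | ∃ x y : ℝ, 0 < x ∧ 0 < y ∧ x ≠ y ∧ r = |f x - f y| / |x - y| ^ α}

/-- The set of growth quotients `|f x|/x^α` of `f` on `(0,∞)`. -/
def growthRatioSet (α : ℝ) (f : ℝ → ℝ) : Set ℝ :=
  {r | ∃ x : ℝ, 0 < x ∧ r = |f x| / x ^ α}

/-- Membership in the Hölder space `C^α_+` (equal to `Lip_+` when `α = 1`). -/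
def MemHolderPlus (α : ℝ) (f : ℝ → ℝ) : Prop :=
  ContinuousOn f (Set.Ioi 0) ∧ BddAbove (holderRatioSet α f) ∧ BddAbove (growthRatioSet α f)

/-- The `C^α_+` norm. -/
def holderPlusNorm (α : ℝ) (f : ℝ → ℝ) : ℝ :=
  sSup (holderRatioSet α f) + sSup (growthRatioSet α f)

/-- `Γ(-σ)`, written through the functional equation `Γ(-σ) = Γ(2-σ)/((-σ)(1-σ))`. -/
def gammaNeg (σ : ℝ) : ℝ := Real.Gamma (2 - σ) / (-σ * (1 - σ))

/-- The kernel `K_σ^λ(x,y)`. -/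
def fracKernelK (lam σ x y : ℝ) : ℝ :=
  1 / (-gammaNeg σ) * ∫ t in Set.Ioi (0 : ℝ), besselHeatKernel lam t x y * t ^ (-1 - σ)

/-- `W_t^λ 1 (x)`. -/
def heatOne (lam t x : ℝ) : ℝ := ∫ y in Set.Ioi (0 : ℝ), besselHeatKernel lam t x y

/-- The function `B_σ^λ(x)`. -/
def fracFunB (lam σ x : ℝ) : ℝ :=
  1 / gammaNeg σ * ∫ t in Set.Ioi (0 : ℝ), (heatOne lam t x - 1) * t ^ (-1 - σ)

/-- The integer `m` with `m - 1 ≤ β < m`. -/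
def fracOrder (β : ℝ) : ℕ := Nat.floor β + 1

/-- The Segovia–Wheeden fractional derivative `∂_t^β F(t)`, a complex number. -/
def fracDeriv (β : ℝ) (F : ℝ → ℝ) (t : ℝ) : ℂ :=
  Complex.exp (-(Real.pi * ((fracOrder β : ℝ) - β)) * Complex.I) /
      Complex.ofReal (Real.Gamma ((fracOrder β : ℝ) - β)) *
    Complex.ofReal
      (∫ s in Set.Ioi (0 : ℝ),
        iteratedDeriv (fracOrder β) F (t + s) * s ^ ((fracOrder β : ℝ) - β - 1))

lemma integral_rpow_mul_one_sub_rpow {a b : ℝ} (ha : 0 < a) (hb : 0 < b) :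
    ∫ r in Ioo (0 : ℝ) 1, r ^ (a - 1) * (1 - r) ^ (b - 1) = Gamma a * Gamma b / Gamma (a + b) := by
  have h := ProbabilityTheory.beta_eq_betaIntegralReal a b ha hb
  rw [ProbabilityTheory.beta] at h
  rw [h, Complex.betaIntegral, intervalIntegral.integral_of_le zero_le_one,
    integral_Ioc_eq_integral_Ioo]
  have : ∫ r in Ioo (0 : ℝ) 1, (r : ℂ) ^ ((a : ℂ) - 1) * (1 - (r : ℂ)) ^ ((b : ℂ) - 1) =
      ∫ r in Ioo (0 : ℝ) 1, ((r ^ (a - 1) * (1 - r) ^ (b - 1) : ℝ) : ℂ) := by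
    refine setIntegral_congr_fun measurableSet_Ioo fun r hr => ?_
    have h1 : 0 ≤ 1 - r := by linarith [hr.2]
    simp only [Complex.ofReal_mul]
    rw [Complex.ofReal_cpow hr.1.le, Complex.ofReal_cpow h1]
    push_cast
    rfl
  rw [this, integral_complex_ofReal, Complex.ofReal_re]

lemma integral_pow_mul_one_sub_sq_rpow {lam : ℝ} (hlam : 0 < lam) (k : ℕ) :
    ∫ s in Ioo (0 : ℝ) 1, s ^ (2 * k) * (1 - s ^ 2) ^ (lam - 1) =
      Gamma (k + 1 / 2) * Gamma lam / (2 * Gamma (k + lam + 1 / 2)) := by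
  have h := integral_rpow_mul_one_sub_rpow (a := k + 1 / 2) (b := lam) (by positivity) hlam
  have hs := integral_comp_rpow_Ioi
    ((Ioo (0 : ℝ) 1).indicator fun r => r ^ ((k + 1 / 2 : ℝ) - 1) * (1 - r) ^ (lam - 1))
    (p := 2) two_ne_zero
  rw [setIntegral_indicator measurableSet_Ioo,
    inter_eq_self_of_subset_right Ioo_subset_Ioi_self, h] at hs
  have h2 : ∫ x in Ioi (0 : ℝ), (|(2 : ℝ)| * x ^ ((2 : ℝ) - 1)) •
      (Ioo (0 : ℝ) 1).indicator (fun r => r ^ ((k + 1 / 2 : ℝ) - 1) * (1 - r) ^ (lam - 1))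
        (x ^ (2 : ℝ)) =
      ∫ x in Ioi (0 : ℝ), (Ioo (0 : ℝ) 1).indicator
        (fun s => 2 * (s ^ (2 * k) * (1 - s ^ 2) ^ (lam - 1))) x := by
    refine setIntegral_congr_fun measurableSet_Ioi fun x hx => ?_
    have hx : 0 < x := hx
    by_cases h1 : x < 1
    · have hx1 : x ∈ Ioo (0 : ℝ) 1 := ⟨hx, h1⟩
      have hx2 : x ^ (2 : ℝ) ∈ Ioo (0 : ℝ) 1 := by
        rw [rpow_two]; exact ⟨by positivity, by nlinarith⟩
      simp only [indicator_of_mem hx1, indicator_of_mem hx2, smul_eq_mul]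
      rw [← rpow_mul hx.le, abs_of_pos two_pos, rpow_two]
      have : x ^ (2 * k) = x ^ ((2 : ℝ) - 1) * x ^ ((2 : ℝ) * ((k + 1 / 2 : ℝ) - 1)) := by
        rw [← rpow_add hx, ← rpow_natCast]
        congr 1
        push_cast
        ring
      rw [this]
      ring
    · have hx1 : x ∉ Ioo (0 : ℝ) 1 := fun h => h1 h.2
      have hx2 : x ^ (2 : ℝ) ∉ Ioo (0 : ℝ) 1 := by
        rw [rpow_two]; intro h; nlinarith [h.2]
      simp only [indicator_of_notMem hx1, indicator_of_notMem hx2, smul_zero]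
  rw [h2, setIntegral_indicator measurableSet_Ioo,
    inter_eq_self_of_subset_right Ioo_subset_Ioi_self, integral_const_mul] at hs
  have h3 : (k : ℝ) + 1 / 2 + lam = k + lam + 1 / 2 := by ring
  rw [h3] at hs
  rw [mul_comm 2 (Gamma _), ← div_div, ← hs]
  ring

lemma integrableOn_pow_mul_one_sub_sq_rpow {lam : ℝ} (hlam : 0 < lam) (k : ℕ) :
    IntegrableOn (fun s : ℝ => s ^ (2 * k) * (1 - s ^ 2) ^ (lam - 1)) (Ioo 0 1) := by
  refine not_imp_comm.1 integral_undef ?_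
  rw [integral_pow_mul_one_sub_sq_rpow hlam]
  have h1 := Gamma_pos_of_pos (show 0 < (k : ℝ) + 1 / 2 by positivity)
  have h2 := Gamma_pos_of_pos hlam
  have h3 := Gamma_pos_of_pos (show 0 < (k : ℝ) + lam + 1 / 2 by positivity)
  positivity

lemma hasSum_integral_cosh {lam : ℝ} (hlam : 0 < lam) (z : ℝ) :
    HasSum (fun k : ℕ => z ^ (2 * k) / (2 * k).factorial *
        ∫ s in Ioo (0 : ℝ) 1, s ^ (2 * k) * (1 - s ^ 2) ^ (lam - 1))
      (∫ s in Ioo (0 : ℝ) 1, cosh (z * s) * (1 - s ^ 2) ^ (lam - 1)) := by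
  have h := hasSum_integral_of_summable_integral_norm (μ := volume.restrict (Ioo (0 : ℝ) 1))
    (F := fun (k : ℕ) s => z ^ (2 * k) / (2 * k).factorial *
      (s ^ (2 * k) * (1 - s ^ 2) ^ (lam - 1)))
    (fun k => (integrableOn_pow_mul_one_sub_sq_rpow hlam k).const_mul _) ?_
  · simp only [integral_const_mul] at h
    convert! h using 1
    refine setIntegral_congr_fun measurableSet_Ioo fun s hs => ?_
    have := (hasSum_cosh (z * s)).mul_right ((1 - s ^ 2) ^ (lam - 1))
    rw [← this.tsum_eq]
    refine tsum_congr fun k => ?_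
    rw [mul_pow]
    ring
  · refine Summable.of_nonneg_of_le (fun k => integral_nonneg fun s => norm_nonneg _) (fun k => ?_)
      ((hasSum_cosh z).mul_right
        (∫ s in Ioo (0 : ℝ) 1, s ^ (2 * 0) * (1 - s ^ 2) ^ (lam - 1))).summable
    rw [← integral_const_mul]
    refine setIntegral_mono_on ((integrableOn_pow_mul_one_sub_sq_rpow hlam k).const_mul _).norm
      ((integrableOn_pow_mul_one_sub_sq_rpow hlam 0).const_mul _) measurableSet_Ioo fun s hs => ?_
    have h1 : 0 ≤ 1 - s ^ 2 := by nlinarith [hs.1, hs.2]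
    have h2 := rpow_nonneg h1 (lam - 1)
    have h3 : 0 ≤ z ^ (2 * k) := by rw [pow_mul]; positivity
    have h4 : 0 ≤ s := hs.1.le
    rw [norm_of_nonneg (by positivity)]
    have h5 : s ^ (2 * k) ≤ s ^ (2 * 0) := by
      rw [mul_zero, pow_zero]
      exact pow_le_one₀ h4 hs.2.le
    gcongr

lemma besselI_eq_integral {lam : ℝ} (hlam : 0 < lam) {z : ℝ} (hz : 0 < z) :
    besselI (lam - 1 / 2) z = (z / 2) ^ (lam - 1 / 2) * (2 / (√π * Gamma lam)) *
      ∫ s in Ioo (0 : ℝ) 1, cosh (z * s) * (1 - s ^ 2) ^ (lam - 1) := by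
  rw [← ((hasSum_integral_cosh hlam z).mul_left _).tsum_eq, besselI]
  refine tsum_congr fun k => ?_
  rw [integral_pow_mul_one_sub_sq_rpow hlam]
  have h1 := Gamma_pos_of_pos (show 0 < (k : ℝ) + 1 / 2 by positivity)
  have h2 := Gamma_pos_of_pos hlam
  have h3 := Gamma_pos_of_pos (show 0 < (k : ℝ) + lam + 1 / 2 by positivity)
  have h4 : (k : ℝ) + (lam - 1 / 2) + 1 = k + lam + 1 / 2 := by ring
  have h5 := Gamma_mul_Gamma_add_half ((k : ℝ) + 1 / 2)
  have h6 : (k : ℝ) + 1 / 2 + 1 / 2 = k + 1 := by ring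
  have h7 : 2 * ((k : ℝ) + 1 / 2) = ((2 * k : ℕ) : ℝ) + 1 := by push_cast; ring
  have h8 : (1 : ℝ) - (((2 * k : ℕ) : ℝ) + 1) = -((2 * k : ℕ) : ℝ) := by ring
  rw [h6, h7, Gamma_nat_eq_factorial, Gamma_nat_eq_factorial, h8, rpow_neg two_pos.le,
    rpow_natCast] at h5
  have h9 : Gamma ((k : ℝ) + 1 / 2) = (2 * k).factorial * (2 ^ (2 * k))⁻¹ * √π / k.factorial := by
    rw [← h5]; field_simp
  rw [h4, h9, rpow_add (by positivity)]
  have h10 : (z / 2) ^ (2 * (k : ℝ)) = z ^ (2 * k) / 2 ^ (2 * k) := by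
    rw [← div_pow, ← rpow_natCast]; push_cast; rfl
  rw [h10]
  have : 0 < √π := by positivity
  field_simp

lemma integrableOn_rpow_mul_exp_neg_mul {a z : ℝ} (ha : 0 < a) (hz : 0 < z) :
    IntegrableOn (fun u : ℝ => u ^ (a - 1) * exp (-(z * u))) (Ioi 0) := by
  refine not_imp_comm.1 integral_undef ?_
  rw [integral_rpow_mul_exp_neg_mul_Ioi ha hz]
  have := Gamma_pos_of_pos ha
  positivity

lemma abs_laplace_le {a m z : ℝ} {g : ℝ → ℝ} (ha : 0 < a) (hz : 0 < z)
    (hgm : ∀ u, 0 < u → |g u| ≤ m) :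
    |z ^ a * ∫ u in Ioi (0 : ℝ), u ^ (a - 1) * exp (-(z * u)) * g u| ≤ m * Gamma a := by
  have h : ‖∫ u in Ioi (0 : ℝ), u ^ (a - 1) * exp (-(z * u)) * g u‖ ≤
      ∫ u in Ioi (0 : ℝ), u ^ (a - 1) * exp (-(z * u)) * m := by
    refine norm_integral_le_of_norm_le ((integrableOn_rpow_mul_exp_neg_mul ha hz).mul_const m) ?_
    refine ae_restrict_of_forall_mem measurableSet_Ioi fun u hu => ?_
    have hu : 0 < u := hu
    rw [norm_mul, norm_of_nonneg (by positivity), norm_eq_abs]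
    exact mul_le_mul_of_nonneg_left (hgm u hu) (by positivity)
  rw [integral_mul_const, integral_rpow_mul_exp_neg_mul_Ioi ha hz, norm_eq_abs] at h
  have hza : 0 < z ^ a := by positivity
  rw [abs_mul, abs_of_pos hza]
  calc _ ≤ z ^ a * ((1 / z) ^ a * Gamma a * m) := by gcongr
    _ = m * Gamma a := by
      rw [one_div, inv_rpow hz.le]
      field_simp

lemma abs_laplace_sub_le {a m A l z : ℝ} {g : ℝ → ℝ} (ha : 0 < a) (hz : 0 < z)
    (hg : Measurable g) (hgm : ∀ u, 0 < u → |g u| ≤ m) (hgA : ∀ u, 0 < u → |g u - A| ≤ l * u) :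
    |z ^ a * (∫ u in Ioi (0 : ℝ), u ^ (a - 1) * exp (-(z * u)) * g u) - A * Gamma a| ≤
      l * Gamma (a + 1) / z := by
  have hza : 0 < z ^ a := by positivity
  have hE := integrableOn_rpow_mul_exp_neg_mul ha hz
  have hint : IntegrableOn (fun u => u ^ (a - 1) * exp (-(z * u)) * g u) (Ioi 0) := by
    refine Integrable.mul_bdd (c := m) hE hg.aestronglyMeasurable ?_
    exact ae_restrict_of_forall_mem measurableSet_Ioi fun u hu => hgm u hu
  have heq : z ^ a * (∫ u in Ioi (0 : ℝ), u ^ (a - 1) * exp (-(z * u)) * g u) - A * Gamma a =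
      z ^ a * ∫ u in Ioi (0 : ℝ), u ^ (a - 1) * exp (-(z * u)) * (g u - A) := by
    simp_rw [mul_sub]
    rw [integral_sub hint (hE.mul_const A), integral_mul_const,
      integral_rpow_mul_exp_neg_mul_Ioi ha hz, one_div, inv_rpow hz.le]
    field_simp
  have h : ‖∫ u in Ioi (0 : ℝ), u ^ (a - 1) * exp (-(z * u)) * (g u - A)‖ ≤
      ∫ u in Ioi (0 : ℝ), u ^ (a + 1 - 1) * exp (-(z * u)) * l := by
    refine norm_integral_le_of_norm_le
      ((integrableOn_rpow_mul_exp_neg_mul (by positivity) hz).mul_const l) ?_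
    refine ae_restrict_of_forall_mem measurableSet_Ioi fun u hu => ?_
    have hu : 0 < u := hu
    rw [norm_mul, norm_of_nonneg (by positivity), norm_eq_abs]
    calc _ ≤ u ^ (a - 1) * exp (-(z * u)) * (l * u) :=
          mul_le_mul_of_nonneg_left (hgA u hu) (by positivity)
      _ = _ := by
        rw [show a + 1 - 1 = (a - 1) + 1 by ring, rpow_add_one hu.ne']
        ring
  rw [integral_mul_const, integral_rpow_mul_exp_neg_mul_Ioi (by positivity) hz, norm_eq_abs] at h
  rw [heq, abs_mul, abs_of_pos hza]
  calc _ ≤ z ^ a * ((1 / z) ^ (a + 1) * Gamma (a + 1) * l) := by gcongr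
    _ = l * Gamma (a + 1) / z := by
      rw [one_div, inv_rpow hz.le, rpow_add_one hz.ne']
      field_simp

lemma rpow_mul_exp_neg_le {a z : ℝ} (ha : 0 < a) (hz : 0 < z) : z ^ a * exp (-z) ≤ a ^ a := by
  have h : z ≤ a * exp (z / a) := by
    have := add_one_le_exp (z / a)
    calc z = a * (z / a) := by field_simp
      _ ≤ _ := by gcongr; linarith
  calc z ^ a * exp (-z) ≤ (a * exp (z / a)) ^ a * exp (-z) := by gcongr
    _ = a ^ a := by
      rw [mul_rpow ha.le (exp_pos _).le, ← exp_mul, div_mul_cancel₀ _ ha.ne', mul_assoc,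
        ← exp_add]
      simp

lemma abs_two_sub_rpow_le {b u : ℝ} (hu : u ∈ Icc (0 : ℝ) 1) : |(2 - u) ^ b| ≤ 2 ^ |b| := by
  have h1 : 1 ≤ 2 - u := by linarith [hu.2]
  rw [abs_of_nonneg (by positivity)]
  calc (2 - u) ^ b ≤ (2 - u) ^ |b| := rpow_le_rpow_of_exponent_le h1 (le_abs_self b)
    _ ≤ 2 ^ |b| := rpow_le_rpow (by linarith) (by linarith [hu.1]) (abs_nonneg b)

lemma abs_two_sub_rpow_sub_le {b u : ℝ} (hu : u ∈ Icc (0 : ℝ) 1) :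
    |(2 - u) ^ b - 2 ^ b| ≤ |b| * 2 ^ |b - 1| * u := by
  have hd : ∀ v ∈ Icc (0 : ℝ) 1,
      HasDerivAt (fun v : ℝ => (2 - v) ^ b) (-1 * b * (2 - v) ^ (b - 1)) v := fun v hv =>
    ((hasDerivAt_id v).const_sub 2).rpow_const (Or.inl (by simp; linarith [hv.2]))
  have h := Convex.norm_image_sub_le_of_norm_deriv_le (f := fun v : ℝ => (2 - v) ^ b)
    (s := Icc (0 : ℝ) 1) (x := 0) (y := u) (C := |b| * 2 ^ |b - 1|)
    (fun v hv => (hd v hv).differentiableAt) (fun v hv => ?_) (convex_Icc 0 1) (by simp) hu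
  · simpa [abs_of_nonneg hu.1] using h
  · rw [(hd v hv).deriv, norm_mul, norm_eq_abs, norm_eq_abs]
    have := abs_two_sub_rpow_le (b := b - 1) hv
    simp only [neg_mul, one_mul, abs_neg]
    gcongr

lemma integral_cosh_eq_integral_one_sub (lam z : ℝ) :
    ∫ s in Ioo (0 : ℝ) 1, cosh (z * s) * (1 - s ^ 2) ^ (lam - 1) =
      ∫ u in Ioo (0 : ℝ) 1, cosh (z * (1 - u)) * (u ^ (lam - 1) * (2 - u) ^ (lam - 1)) := by
  have h := intervalIntegral.integral_comp_sub_left (a := 0) (b := 1)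
    (fun s => cosh (z * s) * (1 - s ^ 2) ^ (lam - 1)) 1
  rw [sub_self, sub_zero, intervalIntegral.integral_of_le zero_le_one,
    intervalIntegral.integral_of_le zero_le_one, integral_Ioc_eq_integral_Ioo,
    integral_Ioc_eq_integral_Ioo] at h
  rw [← h]
  refine setIntegral_congr_fun measurableSet_Ioo fun u hu => ?_
  have h2 : 0 ≤ 2 - u := by linarith [hu.2]
  rw [← mul_rpow hu.1.le h2]
  ring_nf

/-- The scaled Bessel function `√z e^{-z} I_{λ-1/2}(z)` is bounded and has a limit at infinity,
which it approaches at rate `1/z`. -/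
lemma exists_besselI_profile {lam : ℝ} (hlam : 0 < lam) :
    ∃ φ : ℝ → ℝ, Measurable φ ∧ ∃ M L : ℝ, ∀ z, 0 < z →
      √z * exp (-z) * besselI (lam - 1 / 2) z = φ z ∧ |φ z| ≤ M ∧ |φ z - L| ≤ M / z := by
  set g : ℝ → ℝ := (Ioo (0 : ℝ) 1).indicator fun u => (2 - u) ^ (lam - 1) with hgdef
  have hg : Measurable g := Measurable.indicator (by fun_prop) measurableSet_Ioo
  set m : ℝ := 2 ^ |lam - 1| with hm
  have hm0 : 0 < m := by positivity
  have hgm : ∀ u, 0 < u → |g u| ≤ m := fun u hu => by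
    by_cases h1 : u ∈ Ioo (0 : ℝ) 1
    · rw [hgdef, indicator_of_mem h1]
      exact abs_two_sub_rpow_le (Ioo_subset_Icc_self h1)
    · rw [hgdef, indicator_of_notMem h1, abs_zero]
      exact hm0.le
  set A : ℝ := 2 ^ (lam - 1) with hA
  have hA0 : 0 < A := by positivity
  set l : ℝ := |lam - 1| * 2 ^ |lam - 1 - 1| + A with hl
  have hl0 : 0 < l := by positivity
  have hgA : ∀ u, 0 < u → |g u - A| ≤ l * u := fun u hu => by
    by_cases h1 : u ∈ Ioo (0 : ℝ) 1
    · rw [hgdef, indicator_of_mem h1]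
      refine (abs_two_sub_rpow_sub_le (Ioo_subset_Icc_self h1)).trans ?_
      rw [hl]
      nlinarith
    · rw [hgdef, indicator_of_notMem h1, zero_sub, abs_neg, abs_of_pos hA0]
      have h2 : 1 ≤ u := by
        by_contra h
        exact h1 ⟨hu, not_le.1 h⟩
      have h3 : 0 ≤ |lam - 1| * 2 ^ |lam - 1 - 1| := by positivity
      rw [hl]
      nlinarith
  have hG := Gamma_pos_of_pos hlam
  have hG1 := Gamma_pos_of_pos (show 0 < lam + 1 by positivity)
  set J : ℝ → ℝ := fun z => ∫ u in Ioi (0 : ℝ), u ^ (lam - 1) * exp (-(z * u)) * g u with hJ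
  set N : ℝ → ℝ := fun z => ∫ u in Ioi (0 : ℝ), u ^ (lam - 1) * exp (-(z * (2 - u))) * g u with hN
  have hJm : Measurable J := by
    refine (StronglyMeasurable.integral_prod_right (ν := volume.restrict (Ioi (0 : ℝ)))
      (f := fun z u => u ^ (lam - 1) * exp (-(z * u)) * g u) ?_).measurable
    exact Measurable.stronglyMeasurable (by simp only [Function.uncurry_def]; fun_prop)
  have hNm : Measurable N := by
    refine (StronglyMeasurable.integral_prod_right (ν := volume.restrict (Ioi (0 : ℝ)))
      (f := fun z u => u ^ (lam - 1) * exp (-(z * (2 - u))) * g u) ?_).measurable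
    exact Measurable.stronglyMeasurable (by simp only [Function.uncurry_def]; fun_prop)
  set c : ℝ := 2 ^ (1 / 2 - lam) / (√π * Gamma lam) with hc
  have hc0 : 0 < c := by positivity
  have hNbound : ∀ z, 0 < z → ∀ u, 0 < u →
      ‖u ^ (lam - 1) * exp (-(z * (2 - u))) * g u‖ ≤
        u ^ (lam - 1) * exp (-(1 * u)) * (m * exp (1 - z)) := fun z hz u hu => by
    by_cases h1 : u ∈ Ioo (0 : ℝ) 1
    · rw [norm_mul, norm_of_nonneg (by positivity), norm_eq_abs]
      have h2 : exp (-(z * (2 - u))) ≤ exp (-(1 * u)) * exp (1 - z) := by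
        rw [← exp_add, exp_le_exp]
        nlinarith [h1.1, h1.2]
      calc _ ≤ u ^ (lam - 1) * (exp (-(1 * u)) * exp (1 - z)) * m := by
            gcongr
            exact hgm u hu
        _ = _ := by ring
    · rw [hgdef, indicator_of_notMem h1, mul_zero, norm_zero]
      positivity
  have hE1 := integrableOn_rpow_mul_exp_neg_mul hlam one_pos
  have hNle : ∀ z, 0 < z → |N z| ≤ Gamma lam * m * exp 1 * exp (-z) := fun z hz => by
    have h : ‖N z‖ ≤ ∫ u in Ioi (0 : ℝ), u ^ (lam - 1) * exp (-(1 * u)) * (m * exp (1 - z)) :=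
      norm_integral_le_of_norm_le (hE1.mul_const _)
        (ae_restrict_of_forall_mem measurableSet_Ioi fun u hu => hNbound z hz u hu)
    rw [integral_mul_const, integral_rpow_mul_exp_neg_mul_Ioi hlam one_pos, norm_eq_abs, div_one,
      one_rpow, one_mul, sub_eq_add_neg, exp_add] at h
    linarith
  refine ⟨fun z => c * (z ^ lam * J z + z ^ lam * N z), by fun_prop,
    c * (m * Gamma lam + Gamma lam * m * exp 1 * lam ^ lam) +
      c * (l * Gamma (lam + 1) + Gamma lam * m * exp 1 * (lam + 1) ^ (lam + 1)),
    c * (A * Gamma lam), fun z hz => ⟨?_, ?_, ?_⟩⟩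
  · have hJi : IntegrableOn (fun u => u ^ (lam - 1) * exp (-(z * u)) * g u) (Ioi 0) := by
      refine Integrable.mul_bdd (c := m) (integrableOn_rpow_mul_exp_neg_mul hlam hz)
        hg.aestronglyMeasurable ?_
      exact ae_restrict_of_forall_mem measurableSet_Ioi fun u hu => hgm u hu
    have hNi : IntegrableOn (fun u => u ^ (lam - 1) * exp (-(z * (2 - u))) * g u) (Ioi 0) :=
      Integrable.mono' (hE1.mul_const _) (Measurable.aestronglyMeasurable (by fun_prop))
        (ae_restrict_of_forall_mem measurableSet_Ioi fun u hu => hNbound z hz u hu)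
    have hJN : J z + N z = ∫ u in Ioo (0 : ℝ) 1,
        2 * exp (-z) * (cosh (z * (1 - u)) * (u ^ (lam - 1) * (2 - u) ^ (lam - 1))) := by
      rw [hJ, hN]
      simp only
      have hsub : Ioi (0 : ℝ) ∩ Ioo 0 1 = Ioo 0 1 :=
        inter_eq_self_of_subset_right Ioo_subset_Ioi_self
      rw [← integral_add hJi hNi, ← hsub, ← setIntegral_indicator measurableSet_Ioo]
      congr 1
      ext u
      by_cases h1 : u ∈ Ioo (0 : ℝ) 1
      · rw [hgdef, indicator_of_mem h1, indicator_of_mem h1, cosh_eq,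
          show -(z * u) = -z + z * (1 - u) by ring,
          show -(z * (2 - u)) = -z + -(z * (1 - u)) by ring, exp_add, exp_add]
        ring
      · rw [hgdef, indicator_of_notMem h1, indicator_of_notMem h1]
        ring
    have hI : ∫ s in Ioo (0 : ℝ) 1, cosh (z * s) * (1 - s ^ 2) ^ (lam - 1) =
        (J z + N z) / (2 * exp (-z)) := by
      rw [hJN, integral_const_mul, integral_cosh_eq_integral_one_sub]
      field_simp
    have hzl : z ^ lam = √z * z ^ (lam - 1 / 2) := by
      rw [sqrt_eq_rpow, ← rpow_add hz]
      congr 1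
      ring
    beta_reduce
    rw [besselI_eq_integral hlam hz, hI, hzl, hc, div_rpow hz.le two_pos.le,
      show (1 / 2 - lam) = -(lam - 1 / 2) by ring, rpow_neg two_pos.le]
    have : 0 < √π := by positivity
    field_simp
  · have h1 := abs_laplace_le hlam hz hgm
    have h2 : |z ^ lam * N z| ≤ Gamma lam * m * exp 1 * lam ^ lam := by
      rw [abs_mul, abs_of_pos (by positivity)]
      calc _ ≤ z ^ lam * (Gamma lam * m * exp 1 * exp (-z)) := by gcongr; exact hNle z hz
        _ = Gamma lam * m * exp 1 * (z ^ lam * exp (-z)) := by ring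
        _ ≤ _ := by gcongr; exact rpow_mul_exp_neg_le hlam hz
    have h3 : 0 ≤ c * (l * Gamma (lam + 1) + Gamma lam * m * exp 1 * (lam + 1) ^ (lam + 1)) := by
      positivity
    rw [abs_mul, abs_of_pos hc0]
    refine le_trans ?_ (le_add_of_nonneg_right h3)
    gcongr
    exact (abs_add_le _ _).trans (add_le_add h1 h2)
  · have h1 := abs_laplace_sub_le hlam hz hg hgm hgA
    have h2 : |z ^ lam * N z| ≤ Gamma lam * m * exp 1 * (lam + 1) ^ (lam + 1) / z := by
      rw [abs_mul, abs_of_pos (by positivity), le_div_iff₀ hz]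
      calc _ ≤ z ^ lam * (Gamma lam * m * exp 1 * exp (-z)) * z := by gcongr; exact hNle z hz
        _ = Gamma lam * m * exp 1 * (z ^ (lam + 1) * exp (-z)) := by
          rw [rpow_add_one hz.ne']; ring
        _ ≤ _ := by gcongr; exact rpow_mul_exp_neg_le (by positivity) hz
    have h3 : 0 ≤ c * (m * Gamma lam + Gamma lam * m * exp 1 * lam ^ lam) / z := by
      positivity
    rw [add_div]
    refine le_trans ?_ (le_add_of_nonneg_left h3)
    rw [show c * (z ^ lam * J z + z ^ lam * N z) - c * (A * Gamma lam) =
      c * ((z ^ lam * J z - A * Gamma lam) + z ^ lam * N z) by ring, abs_mul, abs_of_pos hc0,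
      mul_div_assoc, add_div]
    gcongr
    exact (abs_add_le _ _).trans (add_le_add h1 h2)

lemma integral_inverse_gamma {a b : ℝ} (ha : 0 < a) (hb : 0 < b) :
    ∫ t in Ioi (0 : ℝ), t ^ (-a - 1) * exp (-(b / t)) = (1 / b) ^ a * Gamma a := by
  rw [← integral_rpow_mul_exp_neg_mul_Ioi ha hb,
    ← integral_comp_rpow_Ioi (fun u => u ^ (a - 1) * exp (-(b * u)))
      (show (-1 : ℝ) ≠ 0 by norm_num)]
  refine setIntegral_congr_fun measurableSet_Ioi fun t ht => ?_
  have ht : 0 < t := ht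
  simp only [smul_eq_mul, abs_neg, abs_one, one_mul]
  rw [← rpow_mul ht.le, ← mul_assoc, ← rpow_add ht, rpow_neg_one, div_eq_mul_inv]
  congr 2
  ring

lemma integrableOn_inverse_gamma {a b : ℝ} (ha : 0 < a) (hb : 0 < b) :
    IntegrableOn (fun t : ℝ => t ^ (-a - 1) * exp (-(b / t))) (Ioi 0) := by
  refine not_imp_comm.1 integral_undef ?_
  rw [integral_inverse_gamma ha hb]
  have := Gamma_pos_of_pos ha
  positivity

lemma one_div_sq_div_four_rpow (a : ℝ) {w : ℝ} (hw : w ≠ 0) :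
    (1 / (w ^ 2 / 4)) ^ a = 4 ^ a * |w| ^ (-(2 * a)) := by
  have h : 0 < |w| := abs_pos.2 hw
  rw [← sq_abs w, one_div_div, div_rpow (by positivity) (by positivity), rpow_neg h.le, rpow_mul h.le,
    rpow_two, div_eq_mul_inv]

lemma besselHeatKernel_mul_rpow_eq {lam σ t x y v : ℝ} (ht : 0 < t) (hx : 0 < x) (hy : 0 < y)
    (hv : √(x * y / (2 * t)) * exp (-(x * y / (2 * t))) *
      besselI (lam - 1 / 2) (x * y / (2 * t)) = v) :
    besselHeatKernel lam t x y * t ^ (-1 - σ) =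
      (√2)⁻¹ * (t ^ (-(σ + 1 / 2) - 1) * exp (-(((x - y) ^ 2 / 4) / t)) * v) := by
  have h1 : exp (-(x ^ 2 + y ^ 2) / (4 * t)) =
      exp (-(((x - y) ^ 2 / 4) / t)) * exp (-(x * y / (2 * t))) := by
    rw [← exp_add]
    congr 1
    field_simp
    ring
  have h2 : t ^ (-(σ + 1 / 2) - 1) = (√t)⁻¹ * t ^ (-1 - σ) := by
    rw [sqrt_eq_rpow, ← rpow_neg ht.le, ← rpow_add ht]
    congr 1
    ring
  have h3 : √(x * y / (2 * t)) = √(x * y) / (√2 * √t) := by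
    rw [sqrt_div (by positivity), sqrt_mul two_pos.le]
  have h4 : √2 * √2 = 2 := mul_self_sqrt two_pos.le
  have h5 : √t * √t = t := mul_self_sqrt ht.le
  rw [← hv, besselHeatKernel, h1, h2, h3]
  have h6 : √(x * y) / (2 * t) = (√2)⁻¹ * (√t)⁻¹ * (√(x * y) / (√2 * √t)) := by
    rw [show 2 * t = (√2 * √2) * (√t * √t) by rw [h4, h5]]
    field_simp
  rw [h6]
  ring

/-- The kernel `K_σ^λ` agrees with the translation invariant kernel `κ |x - y|^{-1-2σ}` up to an
error of order `(x y)^{-σ} |x - y|⁻¹`. -/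
lemma exists_fracKernelK_bounds {lam σ : ℝ} (hlam : 0 < lam) (hσ0 : 0 < σ) (hσ1 : σ < 1) :
    ∃ κ A B : ℝ, 0 < A ∧ 0 < B ∧ ∀ x, 0 < x → ∃ k : ℝ → ℝ, Measurable k ∧
      (∀ w, w < x → fracKernelK lam σ x (x - w) = k w) ∧
      (∀ w, w < x → w ≠ 0 → |k w| ≤ A * |w| ^ (-1 - 2 * σ)) ∧
      ∀ w, w < x → w ≠ 0 →
        |k w - κ * |w| ^ (-1 - 2 * σ)| ≤ B * (x * (x - w)) ^ (-σ) * |w|⁻¹ := by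
  obtain ⟨φ, hφ, M, L, hML⟩ := exists_besselI_profile hlam
  have hM0 : 0 ≤ M := (abs_nonneg _).trans (hML 1 one_pos).2.1
  set P : ℝ := M + |L| with hP
  have hP0 : 0 ≤ P := by positivity
  have hφP : ∀ z, 0 < z → |φ z - L| ≤ P * z ^ (-σ) := fun z hz => by
    rcases le_total z 1 with h | h
    · have h1 : 1 ≤ z ^ (-σ) := one_le_rpow_of_pos_of_le_one_of_nonpos hz h (by linarith)
      calc |φ z - L| ≤ |φ z| + |L| := abs_sub _ _
        _ ≤ P * 1 := by rw [mul_one, hP]; linarith [(hML z hz).2.1]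
        _ ≤ _ := by gcongr
    · calc |φ z - L| ≤ M / z := (hML z hz).2.2
        _ = M * z ^ (-1 : ℝ) := by rw [rpow_neg_one, div_eq_mul_inv]
        _ ≤ P * z ^ (-σ) := by
          have := rpow_le_rpow_of_exponent_le h (show (-1 : ℝ) ≤ -σ by linarith)
          have : M ≤ P := by rw [hP]; linarith [abs_nonneg L]
          gcongr
  set a : ℝ := σ + 1 / 2 with ha
  have ha0 : 0 < a := by positivity
  have hGa := Gamma_pos_of_pos ha0
  have hGh := Gamma_pos_of_pos (show (0 : ℝ) < 1 / 2 by norm_num)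
  set c : ℝ := 1 / (-gammaNeg σ) * (√2)⁻¹ with hc
  set A : ℝ := |c| * (M * (4 ^ a * Gamma a)) with hA
  set B : ℝ := |c| * (P * 2 ^ σ * (4 ^ (1 / 2 : ℝ) * Gamma (1 / 2))) with hB
  have hA0 : 0 ≤ A := by positivity
  have hB0 : 0 ≤ B := by positivity
  refine ⟨c * (L * (4 ^ a * Gamma a)), A + 1, B + 1, by positivity, by positivity,
    fun x hx => ⟨fun w => c * ∫ t in Ioi (0 : ℝ),
      t ^ (-a - 1) * exp (-((w ^ 2 / 4) / t)) * φ (x * (x - w) / (2 * t)), ?_, ?_, ?_, ?_⟩⟩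
  · refine Measurable.const_mul (StronglyMeasurable.measurable ?_) c
    refine StronglyMeasurable.integral_prod_right (ν := volume.restrict (Ioi (0 : ℝ)))
      (f := fun w t => t ^ (-a - 1) * exp (-((w ^ 2 / 4) / t)) * φ (x * (x - w) / (2 * t))) ?_
    exact Measurable.stronglyMeasurable (by simp only [Function.uncurry_def]; fun_prop)
  · intro w hw
    have hy : 0 < x - w := by linarith
    beta_reduce
    rw [fracKernelK, hc, mul_assoc _ (√2)⁻¹, ← integral_const_mul (√2)⁻¹]
    congr 1
    refine setIntegral_congr_fun measurableSet_Ioi fun t ht => ?_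
    have ht : 0 < t := ht
    rw [besselHeatKernel_mul_rpow_eq ht hx hy (hML _ (by positivity)).1, sub_sub_cancel]
  · intro w hw hw0
    have hy : 0 < x - w := by linarith
    have hb : 0 < w ^ 2 / 4 := by positivity
    have h : ‖∫ t in Ioi (0 : ℝ),
        t ^ (-a - 1) * exp (-((w ^ 2 / 4) / t)) * φ (x * (x - w) / (2 * t))‖ ≤
        ∫ t in Ioi (0 : ℝ), t ^ (-a - 1) * exp (-((w ^ 2 / 4) / t)) * M := by
      refine norm_integral_le_of_norm_le ((integrableOn_inverse_gamma ha0 hb).mul_const M) ?_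
      refine ae_restrict_of_forall_mem measurableSet_Ioi fun t ht => ?_
      have ht : 0 < t := ht
      rw [norm_mul, norm_of_nonneg (by positivity), norm_eq_abs]
      exact mul_le_mul_of_nonneg_left (hML _ (by positivity)).2.1 (by positivity)
    rw [integral_mul_const, integral_inverse_gamma ha0 hb, norm_eq_abs,
      one_div_sq_div_four_rpow a hw0, show -(2 * a) = -1 - 2 * σ by rw [ha]; ring] at h
    rw [abs_mul]
    calc _ ≤ |c| * (4 ^ a * |w| ^ (-1 - 2 * σ) * Gamma a * M) := by gcongr
      _ = A * |w| ^ (-1 - 2 * σ) := by rw [hA]; ring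
      _ ≤ _ := by gcongr; linarith
  · intro w hw hw0
    have hy : 0 < x - w := by linarith
    have hxy : 0 < x * (x - w) := by positivity
    have hb : 0 < w ^ 2 / 4 := by positivity
    have hE := integrableOn_inverse_gamma ha0 hb
    have hint : IntegrableOn (fun t => t ^ (-a - 1) * exp (-((w ^ 2 / 4) / t)) *
        φ (x * (x - w) / (2 * t))) (Ioi 0) := by
      refine Integrable.mul_bdd (c := M) hE (Measurable.aestronglyMeasurable (by fun_prop)) ?_
      refine ae_restrict_of_forall_mem measurableSet_Ioi fun t ht => ?_
      have ht : 0 < t := ht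
      exact (hML _ (by positivity)).2.1
    have heq : c * (∫ t in Ioi (0 : ℝ),
        t ^ (-a - 1) * exp (-((w ^ 2 / 4) / t)) * φ (x * (x - w) / (2 * t))) -
          c * (L * (4 ^ a * Gamma a)) * |w| ^ (-1 - 2 * σ) =
        c * ∫ t in Ioi (0 : ℝ),
          t ^ (-a - 1) * exp (-((w ^ 2 / 4) / t)) * (φ (x * (x - w) / (2 * t)) - L) := by
      simp_rw [mul_sub _ (φ _) L]
      rw [integral_sub hint (hE.mul_const L), integral_mul_const, integral_inverse_gamma ha0 hb,
        one_div_sq_div_four_rpow a hw0, show -(2 * a) = -1 - 2 * σ by rw [ha]; ring]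
      ring
    have h : ‖∫ t in Ioi (0 : ℝ),
        t ^ (-a - 1) * exp (-((w ^ 2 / 4) / t)) * (φ (x * (x - w) / (2 * t)) - L)‖ ≤
        ∫ t in Ioi (0 : ℝ), t ^ (-(1 / 2 : ℝ) - 1) * exp (-((w ^ 2 / 4) / t)) *
          (P * (2 ^ σ * (x * (x - w)) ^ (-σ))) := by
      refine norm_integral_le_of_norm_le
        ((integrableOn_inverse_gamma (by norm_num) hb).mul_const _) ?_
      refine ae_restrict_of_forall_mem measurableSet_Ioi fun t ht => ?_
      have ht : 0 < t := ht
      rw [norm_mul, norm_of_nonneg (by positivity), norm_eq_abs]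
      calc _ ≤ t ^ (-a - 1) * exp (-((w ^ 2 / 4) / t)) *
            (P * (x * (x - w) / (2 * t)) ^ (-σ)) :=
            mul_le_mul_of_nonneg_left (hφP _ (by positivity)) (by positivity)
        _ = _ := by
          have h1 : t ^ (-(1 / 2 : ℝ) - 1) = t ^ (-a - 1) * t ^ σ := by
            rw [← rpow_add ht, ha]
            congr 1
            ring
          rw [h1, div_rpow hxy.le (by positivity), mul_rpow two_pos.le ht.le,
            rpow_neg two_pos.le, rpow_neg ht.le]
          field_simp
    rw [integral_mul_const, integral_inverse_gamma (by norm_num) hb, norm_eq_abs,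
      one_div_sq_div_four_rpow _ hw0, show -(2 * (1 / 2 : ℝ)) = -1 by norm_num,
      rpow_neg_one] at h
    rw [heq, abs_mul]
    calc _ ≤ |c| * (4 ^ (1 / 2 : ℝ) * |w|⁻¹ * Gamma (1 / 2) *
          (P * (2 ^ σ * (x * (x - w)) ^ (-σ)))) := by gcongr
      _ = B * (x * (x - w)) ^ (-σ) * |w|⁻¹ := by rw [hB]; ring
      _ ≤ _ := by gcongr; linarith

lemma setIntegral_odd_eq_zero {s : Set ℝ} {f : ℝ → ℝ} (hsm : MeasurableSet s)
    (hs : ∀ w, w ∈ s ↔ -w ∈ s) (hf : ∀ w, f (-w) = -f w) : ∫ w in s, f w = 0 := by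
  have h := integral_neg_eq_self (s.indicator f) volume
  have h2 : ∀ w, s.indicator f (-w) = -s.indicator f w := fun w => by
    by_cases hw : w ∈ s
    · rw [indicator_of_mem hw, indicator_of_mem ((hs w).1 hw), hf]
    · rw [indicator_of_notMem hw, indicator_of_notMem fun h => hw ((hs w).2 h), neg_zero]
  simp_rw [h2] at h
  rw [integral_neg, integral_indicator hsm] at h
  linarith

/-- A principal value integral of a kernel which is odd near the origin up to a bounded error. -/
lemma exists_tendsto_principal_value {x δ κ A D σ : ℝ} {k : ℝ → ℝ} (hk : Measurable k)
    (hσ0 : 0 < σ) (hδ0 : 0 < δ) (hδ1 : δ ≤ 1) (hδx : δ < x) (hA : 0 ≤ A)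
    (hnear : ∀ w, w ≠ 0 → |w| ≤ δ → |k w * w - κ * |w| ^ (-1 - 2 * σ) * w| ≤ D)
    (hfar : ∀ w, w < x → δ < |w| → |k w * w| ≤ A * |w| ^ (-(2 * σ))) :
    ∃ Cx : ℝ, Tendsto (fun ε : ℝ => ∫ w in {w : ℝ | w < x ∧ ε ≤ |w| ∧ |w| ≤ 1}, k w * w)
      (nhdsWithin 0 (Ioi 0)) (nhds Cx) ∧
      |Cx| ≤ 2 * (D * δ + A * ∫ r in δ..1, r ^ (-(2 * σ))) := by
  set q : ℝ → ℝ := {w : ℝ | |w| ≤ δ}.indicator fun w => κ * |w| ^ (-1 - 2 * σ) * w with hq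
  have hδm : MeasurableSet {w : ℝ | |w| ≤ δ} := measurableSet_le continuous_abs.measurable measurable_const
  have hqm : Measurable q := Measurable.indicator (by fun_prop) hδm
  set S : ℝ → Set ℝ := fun ε => {w : ℝ | w < x ∧ ε ≤ |w| ∧ |w| ≤ 1} with hS
  have hSm : ∀ ε, MeasurableSet (S ε) := fun ε =>
    (measurableSet_lt measurable_id measurable_const).inter
      ((measurableSet_le measurable_const continuous_abs.measurable).inter
        (measurableSet_le continuous_abs.measurable measurable_const))
  set g : ℝ → ℝ := fun w => k w * w - q w with hg
  have hgm : Measurable g := by fun_prop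
  set H : ℝ → ℝ := (Ioc 0 δ).indicator (fun _ => D) +
    (Ioc δ 1).indicator (fun r => A * r ^ (-(2 * σ))) with hH
  have hD : 0 ≤ D := (abs_nonneg _).trans (hnear δ hδ0.ne' (abs_of_pos hδ0).le)
  have hi1 : IntegrableOn (fun _ : ℝ => D) (Ioc 0 δ) := integrableOn_const (by simp)
  have hii : IntervalIntegrable (fun r : ℝ => r ^ (-(2 * σ))) volume δ 1 :=
    intervalIntegral.intervalIntegrable_rpow (Or.inr (by
      rw [uIcc_of_le hδ1]; intro h; linarith [h.1]))
  have hi2 : IntegrableOn (fun r : ℝ => A * r ^ (-(2 * σ))) (Ioc δ 1) :=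
    ((intervalIntegrable_iff_integrableOn_Ioc_of_le hδ1).1 hii).const_mul A
  have hHi : Integrable H :=
    (hi1.integrable_indicator measurableSet_Ioc).add (hi2.integrable_indicator measurableSet_Ioc)
  have hsub : Ioi (0 : ℝ) ∩ Ioc δ 1 = Ioc δ 1 :=
    inter_eq_self_of_subset_right fun r hr => hδ0.trans hr.1
  have hHint : ∫ w, H |w| = 2 * (D * δ + A * ∫ r in δ..1, r ^ (-(2 * σ))) := by
    rw [integral_comp_abs, hH]
    simp only [Pi.add_apply]
    rw [integral_add (hi1.integrable_indicator measurableSet_Ioc).integrableOn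
      (hi2.integrable_indicator measurableSet_Ioc).integrableOn,
      setIntegral_indicator measurableSet_Ioc, setIntegral_indicator measurableSet_Ioc,
      inter_eq_self_of_subset_right Ioc_subset_Ioi_self,
      hsub, setIntegral_const,
      integral_const_mul, intervalIntegral.integral_of_le hδ1]
    simp [hδ0.le, mul_comm]
  have hgH : ∀ w, w ∈ S 0 → w ≠ 0 → ‖g w‖ ≤ H |w| := fun w hw hw0 => by
    have hw' : 0 < |w| := abs_pos.2 hw0
    rcases le_or_gt |w| δ with h | h
    · have h1 : |w| ∈ Ioc 0 δ := ⟨hw', h⟩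
      have h2 : |w| ∉ Ioc δ 1 := fun h' => not_lt.2 h h'.1
      have h3 : w ∈ {w : ℝ | |w| ≤ δ} := h
      rw [hH, hg, hq, Pi.add_apply, indicator_of_mem h1, indicator_of_notMem h2, add_zero]
      simp only [indicator_of_mem h3]
      exact hnear w hw0 h
    · have h1 : |w| ∉ Ioc 0 δ := fun h' => not_lt.2 h'.2 h
      have h2 : |w| ∈ Ioc δ 1 := ⟨h, hw.2.2⟩
      have h3 : w ∉ {w : ℝ | |w| ≤ δ} := not_le.2 h
      rw [hH, hg, hq, Pi.add_apply, indicator_of_notMem h1, indicator_of_mem h2, zero_add]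
      simp only [indicator_of_notMem h3, sub_zero]
      exact hfar w hw.1 h
  have hH0 : ∀ r, 0 ≤ H r := fun r => by
    refine add_nonneg (indicator_nonneg (fun _ _ => hD) _) (indicator_nonneg (fun r hr => ?_) _)
    have : 0 < r := hδ0.trans hr.1
    positivity
  have hHm : Measurable H :=
    (measurable_const.indicator measurableSet_Ioc).add
      (Measurable.indicator (by fun_prop) measurableSet_Ioc)
  have hHabs : Integrable fun w => H |w| := by
    refine (hHi.add hHi.comp_neg).mono' (hHm.comp continuous_abs.measurable).aestronglyMeasurable
      (Eventually.of_forall fun w => ?_)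
    rw [norm_of_nonneg (hH0 _), Pi.add_apply]
    rcases abs_choice w with h | h <;> rw [h] <;> linarith [hH0 w, hH0 (-w)]
  have hae : ∀ᵐ w : ℝ, w ≠ 0 := Measure.ae_ne volume 0
  have hdom : ∀ ε, ∀ᵐ w : ℝ, 0 ≤ ε → ‖(S ε).indicator g w‖ ≤ H |w| := fun ε => by
    filter_upwards [hae] with w hw hε
    by_cases h : w ∈ S ε
    · rw [indicator_of_mem h]
      exact hgH w ⟨h.1, abs_nonneg w, h.2.2⟩ hw
    · rw [indicator_of_notMem h, norm_zero]
      exact hH0 _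
  have hlim : Tendsto (fun ε : ℝ => ∫ w, (S ε).indicator g w) (nhdsWithin 0 (Ioi 0))
      (nhds (∫ w, (S 0).indicator g w)) := by
    refine tendsto_integral_filter_of_dominated_convergence (fun w => H |w|)
      (Eventually.of_forall fun ε => (hgm.indicator (hSm ε)).aestronglyMeasurable) ?_ hHabs ?_
    · filter_upwards [self_mem_nhdsWithin] with ε hε
      filter_upwards [hdom ε] with w hw using hw (le_of_lt hε)
    · filter_upwards [hae] with w hw
      refine tendsto_const_nhds.congr' ?_
      filter_upwards [nhdsWithin_le_nhds (Iio_mem_nhds (abs_pos.2 hw))] with ε hε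
      have : w ∈ S 0 ↔ w ∈ S ε :=
        ⟨fun h => ⟨h.1, le_of_lt hε, h.2.2⟩, fun h => ⟨h.1, abs_nonneg w, h.2.2⟩⟩
      by_cases h : w ∈ S 0
      · rw [indicator_of_mem h, indicator_of_mem (this.1 h)]
      · rw [indicator_of_notMem h, indicator_of_notMem fun h' => h (this.2 h')]
  refine ⟨∫ w, (S 0).indicator g w, hlim.congr' ?_, ?_⟩
  · filter_upwards [self_mem_nhdsWithin] with ε hε
    have hε : 0 < ε := hε
    rw [integral_indicator (hSm ε)]
    have hgi : IntegrableOn g (S ε) := by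
      rw [← integrable_indicator_iff (hSm ε)]
      refine hHabs.mono' (hgm.indicator (hSm ε)).aestronglyMeasurable ?_
      filter_upwards [hdom ε] with w hw using hw hε.le
    have hqi : IntegrableOn q (S ε) := by
      refine Measure.integrableOn_of_bounded (M := |κ| * ε ^ (-1 - 2 * σ) * 1) ?_
        hqm.aestronglyMeasurable ?_
      · refine ((measure_mono (fun w hw => ?_)).trans_lt
          (measure_Icc_lt_top (a := (-1 : ℝ)) (b := 1))).ne
        exact abs_le.1 hw.2.2
      · refine ae_restrict_of_forall_mem (hSm ε) fun w hw => ?_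
        refine (norm_indicator_le_norm_self _ _).trans ?_
        have hwp : 0 < |w| := hε.trans_le hw.2.1
        rw [norm_mul, norm_mul, norm_eq_abs, norm_eq_abs w, norm_of_nonneg (by positivity)]
        have h1 := rpow_le_rpow_of_nonpos hε hw.2.1 (show -1 - 2 * σ ≤ 0 by linarith)
        have h2 : |w| ≤ 1 := hw.2.2
        exact mul_le_mul (mul_le_mul_of_nonneg_left h1 (abs_nonneg κ)) h2 hwp.le (by positivity)
    have hq0 : ∫ w in S ε, q w = 0 := by
      rw [hq, setIntegral_indicator hδm]
      refine setIntegral_odd_eq_zero ((hSm ε).inter hδm) (fun w => ?_) (fun w => ?_)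
      · simp only [hS, mem_inter_iff, mem_ofPred_eq, abs_neg]
        constructor
        · rintro ⟨⟨-, h2, h3⟩, h4⟩
          exact ⟨⟨by linarith [neg_abs_le w], h2, h3⟩, h4⟩
        · rintro ⟨⟨-, h2, h3⟩, h4⟩
          exact ⟨⟨by linarith [le_abs_self w], h2, h3⟩, h4⟩
      · rw [abs_neg]
        ring
    calc _ = (∫ w in S ε, g w) + ∫ w in S ε, q w := by rw [hq0, add_zero]
      _ = ∫ w in S ε, (g w + q w) := (integral_add hgi hqi).symm
      _ = _ := by simp [hg, hS]
  · rw [← hHint, ← norm_eq_abs]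
    refine norm_integral_le_of_norm_le hHabs ?_
    filter_upwards [hdom 0] with w hw using hw le_rfl

lemma integral_rpow_neg_two_mul_le {σ x : ℝ} (hσ : 1 / 2 < σ) (hx : 0 < x) :
    ∫ r in (min 1 (x / 2))..1, r ^ (-(2 * σ)) ≤
      2 ^ (2 * σ - 1) / (2 * σ - 1) * x ^ (1 - 2 * σ) := by
  have hs : 0 < 2 * σ - 1 := by linarith
  rcases le_total 1 (x / 2) with h | h
  · rw [min_eq_left h, intervalIntegral.integral_same]
    positivity
  · rw [min_eq_right h, integral_rpow (Or.inr ⟨by linarith, fun h' => by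
      rw [uIcc_of_le h] at h'; linarith [h'.1]⟩), one_rpow,
      show -(2 * σ) + 1 = -(2 * σ - 1) by ring, show 1 - 2 * σ = -(2 * σ - 1) by ring,
      div_rpow hx.le two_pos.le, rpow_neg two_pos.le, div_inv_eq_mul, div_neg, ← neg_div, neg_sub,
      div_mul_eq_mul_div]
    gcongr
    linarith

lemma integral_rpow_neg_one_le {x : ℝ} (hx : 0 < x) :
    ∫ r in (min 1 (x / 2))..1, r ^ (-1 : ℝ) ≤ 1 + if x < 1 then |log x| else 0 := by
  have h0 : 0 ≤ if x < 1 then |log x| else 0 := by split_ifs <;> positivity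
  rcases le_total 1 (x / 2) with h | h
  · rw [min_eq_left h, intervalIntegral.integral_same]
    linarith
  · simp_rw [rpow_neg_one]
    rw [min_eq_right h, integral_inv_of_pos (by positivity) one_pos, one_div_div,
      log_div two_ne_zero hx.ne']
    have h2 : log 2 ≤ 1 := log_two_lt_d9.le.trans (by norm_num)
    split_ifs with h1
    · linarith [neg_abs_le (log x)]
    · linarith [log_nonneg (not_lt.1 h1)]

/-- Existence and size estimates for `C_σ^λ(x)`. -/
theorem C_sigma_estimates (lam σ : ℝ) (hlam : 0 < lam) (hσ0 : 1 / 2 ≤ σ) (hσ1 : σ < 1) :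
    ∃ C : ℝ, 0 < C ∧ ∀ x : ℝ, 0 < x → ∃ Cx : ℝ,
      Tendsto (fun ε : ℝ =>
          ∫ y in {y : ℝ | 0 < y ∧ ε ≤ |x - y| ∧ |x - y| ≤ 1}, fracKernelK lam σ x y * (x - y))
        (nhdsWithin 0 (Set.Ioi 0)) (nhds Cx) ∧
      (σ = 1 / 2 → |Cx| ≤ C * (1 + if x < 1 then |Real.log x| else 0)) ∧
      (1 / 2 < σ → |Cx| ≤ C * x ^ (1 - 2 * σ)) := by
  obtain ⟨κ, A, B, hA, hB, hK⟩ := exists_fracKernelK_bounds (σ := σ) hlam (by linarith) hσ1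
  have hE : 0 ≤ (2 : ℝ) ^ (2 * σ - 1) / (2 * σ - 1) := by
    have : 0 ≤ 2 * σ - 1 := by linarith
    positivity
  refine ⟨2 * (B * 2 ^ σ + A * (1 + 2 ^ (2 * σ - 1) / (2 * σ - 1))), by positivity, fun x hx => ?_⟩
  obtain ⟨k, hk, hKk, hkA, hkB⟩ := hK x hx
  have hδ0 : 0 < min 1 (x / 2) := lt_min one_pos (by positivity)
  have hδx : min 1 (x / 2) < x := (min_le_right _ _).trans_lt (by linarith)
  obtain ⟨Cx, hlim, hCx⟩ := exists_tendsto_principal_value (κ := κ) (A := A) (σ := σ)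
    (D := B * (x ^ 2 / 2) ^ (-σ)) hk (by linarith) hδ0 (min_le_left _ _) hδx hA.le
    (fun w hw0 hw => by
      have hw2 : |w| ≤ x / 2 := hw.trans (min_le_right _ _)
      have hw3 := le_abs_self w
      have hwx : w < x := by linarith
      have hwp : 0 < |w| := abs_pos.2 hw0
      rw [← sub_mul, abs_mul]
      calc _ ≤ B * (x * (x - w)) ^ (-σ) * |w|⁻¹ * |w| := by gcongr; exact hkB w hwx hw0
        _ = B * (x * (x - w)) ^ (-σ) := by field_simp
        _ ≤ _ := by
          gcongr ?_ * ?_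
          exact rpow_le_rpow_of_nonpos (by positivity) (by nlinarith) (by linarith))
    (fun w hwx hw => by
      have hwp : 0 < |w| := hδ0.trans hw
      rw [abs_mul]
      calc _ ≤ A * |w| ^ (-1 - 2 * σ) * |w| := by
            gcongr; exact hkA w hwx (abs_pos.1 hwp)
        _ = _ := by
          rw [mul_assoc, ← rpow_add_one hwp.ne']
          congr 2
          ring)
  have hnear : B * (x ^ 2 / 2) ^ (-σ) * min 1 (x / 2) ≤ B * 2 ^ σ * x ^ (1 - 2 * σ) := by
    have h1 : (x ^ 2 / 2) ^ (-σ) * x = 2 ^ σ * x ^ (1 - 2 * σ) := by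
      rw [div_rpow (by positivity) two_pos.le, rpow_neg two_pos.le, div_inv_eq_mul, ← rpow_two,
        ← rpow_mul hx.le, show 1 - 2 * σ = 2 * -σ + 1 by ring, rpow_add_one hx.ne']
      ring
    calc _ ≤ B * (x ^ 2 / 2) ^ (-σ) * x := by gcongr
      _ = _ := by rw [mul_assoc, h1, mul_assoc]
  refine ⟨Cx, hlim.congr fun ε => ?_, fun hσ => ?_, fun hσ => hCx.trans ?_⟩
  · have habs : Measurable fun y : ℝ => |x - y| := by fun_prop
    have hm : MeasurableSet {y : ℝ | 0 < y ∧ ε ≤ |x - y| ∧ |x - y| ≤ 1} :=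
      (measurableSet_lt measurable_const measurable_id).inter
        ((measurableSet_le measurable_const habs).inter (measurableSet_le habs measurable_const))
    have hm' : MeasurableSet {w : ℝ | w < x ∧ ε ≤ |w| ∧ |w| ≤ 1} :=
      (measurableSet_lt measurable_id measurable_const).inter
        ((measurableSet_le measurable_const continuous_abs.measurable).inter
          (measurableSet_le continuous_abs.measurable measurable_const))
    rw [← integral_indicator hm, ← integral_indicator hm',
      ← integral_sub_left_eq_self (indicator {y : ℝ | 0 < y ∧ ε ≤ |x - y| ∧ |x - y| ≤ 1} _) _ x]
    congr 1
    ext w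
    have hmem : x - w ∈ {y : ℝ | 0 < y ∧ ε ≤ |x - y| ∧ |x - y| ≤ 1} ↔
        w ∈ {w : ℝ | w < x ∧ ε ≤ |w| ∧ |w| ≤ 1} := by
      simp only [mem_ofPred_eq, sub_sub_cancel, sub_pos]
    by_cases h : w ∈ {w : ℝ | w < x ∧ ε ≤ |w| ∧ |w| ≤ 1}
    · rw [indicator_of_mem h, indicator_of_mem (hmem.2 h), sub_sub_cancel, hKk w h.1]
    · rw [indicator_of_notMem h, indicator_of_notMem fun h' => h (hmem.1 h')]
  · subst hσ
    have h1 := integral_rpow_neg_one_le hx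
    rw [show 1 - 2 * (1 / 2 : ℝ) = 0 by norm_num, rpow_zero, mul_one] at hnear
    rw [show -(2 * (1 / 2 : ℝ)) = -1 by norm_num] at hCx
    set T : ℝ := if x < 1 then |log x| else 0 with hT
    have hT0 : 0 ≤ T := by rw [hT]; split_ifs <;> positivity
    have h2 : A * ∫ r in (min 1 (x / 2))..1, r ^ (-1 : ℝ) ≤ A * (1 + T) := by gcongr
    have h3 : 0 ≤ A * ((2 : ℝ) ^ (2 * (1 / 2 : ℝ) - 1) / (2 * (1 / 2) - 1)) * (1 + T) := by
      positivity
    have h4 : 0 ≤ B * 2 ^ (1 / 2 : ℝ) * T := by positivity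
    linarith
  · have h1 := mul_le_mul_of_nonneg_left (integral_rpow_neg_two_mul_le hσ hx) hA.le
    have h2 : 0 ≤ A * x ^ (1 - 2 * σ) := by positivity
    linarith
end
end

section
/- Let λ ≥ 1 and let u ∈ L^∞(ℝ₊) be a function belonging to C^α_+ for some 0 < α < 1 and satisfying ∫₀^∞ |u(y)|/(1+y) dy < ∞. Then for every x > 0, lim_{σ→0⁺} (1/Γ(−σ)) ∫₀^∞ (W_t^λ u(x) − u(x)) t^{−1−σ} dt = u(x). -/
open Real MeasureTheory Set Filter

noncomputable section

lemma Gamma_add_ge {s a : ℝ} (hs : 1 / 2 ≤ s) (ha : 0 < a) :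
    Real.Gamma s * s ^ a / (1 + 2 * a) ≤ Real.Gamma (s + a) := by
  have hs0 : 0 < s := by linarith
  have hslope := Real.convexOn_log_Gamma.slope_mono_adjacent (x := s) (y := s + 1)
    (z := s + 1 + a) (mem_Ioi.2 hs0) (mem_Ioi.2 (by linarith)) (by linarith) (by linarith)
  have hG0 := Real.Gamma_pos_of_pos hs0
  have hG1 := Real.Gamma_pos_of_pos (show 0 < s + 1 + a by linarith)
  simp only [Function.comp_apply, Real.Gamma_add_one hs0.ne',
    Real.log_mul hs0.ne' hG0.ne', add_sub_cancel_left, div_one, add_sub_cancel_right] at hslope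
  rw [le_div_iff₀ ha] at hslope
  have h1 : Real.Gamma s * s * s ^ a ≤ Real.Gamma (s + 1 + a) := by
    rw [← Real.log_le_log_iff (by positivity) hG1, Real.log_mul (by positivity) (by positivity),
      Real.log_mul hG0.ne' hs0.ne', Real.log_rpow hs0]
    linarith
  rw [show s + 1 + a = s + a + 1 by ring, Real.Gamma_add_one (by linarith)] at h1
  have h2 : s + a ≤ s * (1 + 2 * a) := by nlinarith
  have h3 := Real.Gamma_pos_of_pos (show 0 < s + a by linarith)
  rw [div_le_iff₀ (by linarith)]
  have h4 : (s + a) * Real.Gamma (s + a) ≤ s * (1 + 2 * a) * Real.Gamma (s + a) := by gcongr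
  have h5 : s * (Real.Gamma s * s ^ a) ≤ s * (Real.Gamma (s + a) * (1 + 2 * a)) := by linarith
  exact le_of_mul_le_mul_left h5 hs0

lemma factorial_mul_Gamma_half (k : ℕ) :
    (k.factorial : ℝ) * Real.Gamma (k + 1 / 2) = √π * (2 * k).factorial / 4 ^ k := by
  have h := Real.Gamma_mul_Gamma_add_half ((k : ℝ) + 1 / 2)
  rw [show (k : ℝ) + 1 / 2 + 1 / 2 = k + 1 by ring, Real.Gamma_nat_eq_factorial,
    show 2 * ((k : ℝ) + 1 / 2) = ((2 * k : ℕ) : ℝ) + 1 by push_cast; ring,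
    Real.Gamma_nat_eq_factorial, show 1 - (((2 * k : ℕ) : ℝ) + 1) = -((2 * k : ℕ) : ℝ) by ring,
    Real.rpow_neg (by norm_num), Real.rpow_natCast, pow_mul] at h
  rw [mul_comm, h]
  norm_num
  ring

lemma factorial_add_le (n m : ℕ) :
    (n + m).factorial ≤ n.factorial * m.factorial * (n + 1) ^ m := by
  induction m with
  | zero => simp
  | succ m ih =>
    rw [← add_assoc, Nat.factorial_succ, Nat.factorial_succ, pow_succ]
    calc (n + m + 1) * (n + m).factorial
        ≤ ((m + 1) * (n + 1)) * (n.factorial * m.factorial * (n + 1) ^ m) := by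
          gcongr; nlinarith
      _ = _ := by ring

lemma rpow_le_self_add_pow {a p : ℝ} {m : ℕ} (ha : 0 ≤ a) (hp : 1 ≤ p) (hm : p ≤ m) :
    a ^ p ≤ a + a ^ m := by
  rcases ha.eq_or_lt with rfl | ha0
  · rw [Real.zero_rpow (by linarith)]; positivity
  rcases le_total a 1 with h | h
  · have := Real.rpow_le_rpow_of_exponent_ge ha0 h hp
    rw [Real.rpow_one] at this
    linarith [pow_nonneg ha m]
  · have := Real.rpow_le_rpow_of_exponent_le h hm
    rw [Real.rpow_natCast] at this
    linarith

lemma besselI_term_le {lam z : ℝ} {m : ℕ} (hlam : 1 ≤ lam) (hm : lam ≤ m) (hz : 0 < z) (k : ℕ) :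
    √z * ((z / 2) ^ (2 * (k : ℝ) + (lam - 1 / 2)) /
      ((k.factorial : ℝ) * Real.Gamma ((k : ℝ) + (lam - 1 / 2) + 1))) ≤
    2 * (1 + 2 * lam) * (z ^ (2 * k + 1) / (2 * k + 1).factorial +
      m.factorial * (z ^ (2 * k + m) / (2 * k + m).factorial)) := by
  have hk : (0 : ℝ) < k + 1 / 2 := by positivity
  have hG := Real.Gamma_pos_of_pos hk
  have hk0 : (0 : ℝ) < k.factorial := by positivity
  have hΓ := Gamma_add_ge (s := k + 1 / 2) (a := lam) (by linarith [Nat.cast_nonneg (α := ℝ) k])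
    (by linarith)
  rw [show (k : ℝ) + (lam - 1 / 2) + 1 = k + 1 / 2 + lam by ring]
  have hden : √π * (2 * k).factorial / 4 ^ k * (k + 1 / 2) ^ lam / (1 + 2 * lam) ≤
      (k.factorial : ℝ) * Real.Gamma (k + 1 / 2 + lam) := by
    rw [← factorial_mul_Gamma_half]
    calc _ = (k.factorial : ℝ) * (Real.Gamma (k + 1 / 2) * (k + 1 / 2) ^ lam / (1 + 2 * lam)) := by
            ring
      _ ≤ _ := by gcongr
  have hnum : √z * (z / 2) ^ (2 * (k : ℝ) + (lam - 1 / 2)) ≤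
      2 * (z / 2) ^ (2 * k) * (z / 2) ^ lam := by
    have h0 : 0 < z / 2 := by positivity
    have : √z = √2 * (z / 2) ^ (1 / 2 : ℝ) := by
      rw [← Real.sqrt_eq_rpow, ← Real.sqrt_mul (by norm_num)]; congr 1; ring
    rw [this, mul_assoc, ← Real.rpow_add h0, ← Real.rpow_natCast, mul_assoc, ← Real.rpow_add h0]
    have h2 : √2 ≤ 2 := by rw [Real.sqrt_le_left (by norm_num)]; norm_num
    rw [show 1 / 2 + (2 * (k : ℝ) + (lam - 1 / 2)) = ((2 * k : ℕ) : ℝ) + lam by push_cast; ring]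
    gcongr
  have hpi : 1 ≤ √π := by rw [Real.one_le_sqrt]; linarith [Real.pi_gt_three]
  set a : ℝ := z / (2 * k + 1) with ha
  have ha0 : 0 ≤ a := by positivity
  have hapow : a ^ lam = (z / 2) ^ lam / (k + 1 / 2) ^ lam := by
    rw [← Real.div_rpow (by positivity) hk.le]; congr 1; rw [ha]; field_simp
  have hstep : √z * ((z / 2) ^ (2 * (k : ℝ) + (lam - 1 / 2)) /
      ((k.factorial : ℝ) * Real.Gamma (k + 1 / 2 + lam))) ≤
      2 * (1 + 2 * lam) * (z ^ (2 * k) / (2 * k).factorial * a ^ lam) := by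
    have hpos : 0 < (1 : ℝ) * (2 * k).factorial / 4 ^ k * (k + 1 / 2) ^ lam / (1 + 2 * lam) := by
      have : 0 < 1 + 2 * lam := by linarith
      positivity
    calc _ = (√z * (z / 2) ^ (2 * (k : ℝ) + (lam - 1 / 2))) /
      ((k.factorial : ℝ) * Real.Gamma (k + 1 / 2 + lam)) := by ring
      _ ≤ (2 * (z / 2) ^ (2 * k) * (z / 2) ^ lam) /
          (1 * (2 * k).factorial / 4 ^ k * (k + 1 / 2) ^ lam / (1 + 2 * lam)) := by
          refine div_le_div₀ (by positivity) hnum hpos (le_trans ?_ hden)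
          gcongr
      _ = _ := by
          rw [hapow, div_pow, pow_mul 2 2 k]
          have : 1 + 2 * lam ≠ 0 := by linarith
          norm_num
          field_simp
  have h1 : z ^ (2 * k) / (2 * k).factorial * a = z ^ (2 * k + 1) / (2 * k + 1).factorial := by
    rw [ha, Nat.factorial_succ, pow_succ]; push_cast; field_simp
  have h2 : z ^ (2 * k) / (2 * k).factorial * a ^ m ≤
      m.factorial * (z ^ (2 * k + m) / (2 * k + m).factorial) := by
    have hf : ((2 * k + m).factorial : ℝ) ≤
        (2 * k).factorial * m.factorial * (2 * k + 1) ^ m := by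
      exact_mod_cast factorial_add_le (2 * k) m
    rw [ha, div_pow, div_mul_div_comm, ← pow_add, ← mul_div_assoc,
      div_le_div_iff₀ (by positivity) (by positivity)]
    have : 0 ≤ z ^ (2 * k + m) := by positivity
    nlinarith
  refine hstep.trans ?_
  calc _ ≤ 2 * (1 + 2 * lam) * (z ^ (2 * k) / (2 * k).factorial * (a + a ^ m)) := by
        gcongr
        exact rpow_le_self_add_pow ha0 hlam hm
    _ ≤ 2 * (1 + 2 * lam) * (z ^ (2 * k + 1) / (2 * k + 1).factorial +
      m.factorial * (z ^ (2 * k + m) / (2 * k + m).factorial)) := by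
        gcongr
        rw [mul_add, h1]
        gcongr

lemma Real.tsum_pow_div_factorial (z : ℝ) :
    ∑' n : ℕ, z ^ n / n.factorial = Real.exp z := by
  rw [Real.exp_eq_exp_ℝ, NormedSpace.exp_eq_tsum_div]

lemma summable_pow_div_factorial_comp {z : ℝ} {i : ℕ → ℕ} (hi : Function.Injective i) :
    Summable fun k => z ^ i k / (i k).factorial :=
  (Real.summable_pow_div_factorial z).comp_injective hi

lemma tsum_pow_div_factorial_comp_le {z : ℝ} (hz : 0 ≤ z) {i : ℕ → ℕ}
    (hi : Function.Injective i) : ∑' k, z ^ i k / (i k).factorial ≤ Real.exp z := by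
  rw [← Real.tsum_pow_div_factorial]
  exact tsum_comp_le_tsum_of_inj (Real.summable_pow_div_factorial z)
    (fun n => by positivity) hi

lemma tsum_pow_succ_div_factorial_comp_le {z : ℝ} (hz : 0 ≤ z) {i : ℕ → ℕ}
    (hi : Function.Injective i) :
    ∑' k, z ^ (i k + 1) / (i k + 1).factorial ≤ z * Real.exp z := by
  have hs : Function.Injective fun k => i k + 1 := fun a b h => hi (by simpa using h)
  calc _ ≤ ∑' k, z * (z ^ i k / (i k).factorial) := by
        refine (summable_pow_div_factorial_comp hs).tsum_le_tsum (fun k => ?_)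
          ((summable_pow_div_factorial_comp hi).mul_left z)
        rw [pow_succ, mul_comm, mul_div_assoc]
        gcongr
        omega
    _ ≤ _ := by
        rw [tsum_mul_left]
        gcongr
        exact tsum_pow_div_factorial_comp_le hz hi

lemma besselI_term_nonneg {ν z : ℝ} (hν : -1 < ν) (hz : 0 ≤ z) (k : ℕ) :
    0 ≤ (z / 2) ^ (2 * (k : ℝ) + ν) / ((k.factorial : ℝ) * Real.Gamma ((k : ℝ) + ν + 1)) := by
  have := Real.Gamma_pos_of_pos (show 0 < (k : ℝ) + ν + 1 by
    linarith [Nat.cast_nonneg (α := ℝ) k])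
  positivity

lemma exists_besselI_bound {lam : ℝ} (hlam : 1 ≤ lam) :
    ∃ C : ℝ, 0 < C ∧ ∀ z : ℝ, 0 < z →
      √z * besselI (lam - 1 / 2) z ≤ C * Real.exp z ∧
      √z * besselI (lam - 1 / 2) z ≤ C * (z * Real.exp z) := by
  obtain ⟨n, hn⟩ := exists_nat_ge lam
  have hinj1 : Function.Injective fun k : ℕ => 2 * k := fun a b h => by simpa using h
  have hinj2 : Function.Injective fun k : ℕ => 2 * k + n := fun a b h => by simpa using h
  have hinj3 : Function.Injective fun k : ℕ => 2 * k + 1 := fun a b h => by simpa using h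
  have hinj4 : Function.Injective fun k : ℕ => 2 * k + (n + 1) := fun a b h => by simpa using h
  refine ⟨2 * (1 + 2 * lam) * (1 + (n + 1).factorial), by positivity, fun z hz => ?_⟩
  have hle := besselI_term_le (m := n + 1) hlam (by push_cast; linarith) hz
  have hs3 := summable_pow_div_factorial_comp (z := z) hinj3
  have hs4 := summable_pow_div_factorial_comp (z := z) hinj4
  have hsR := (hs3.add (hs4.mul_left ((n + 1).factorial : ℝ))).mul_left (2 * (1 + 2 * lam))
  have hsL := Summable.of_nonneg_of_le
    (fun k => mul_nonneg (Real.sqrt_nonneg z) (besselI_term_nonneg (by linarith) hz.le k)) hle hsR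
  have hmain : √z * besselI (lam - 1 / 2) z ≤ 2 * (1 + 2 * lam) *
      (∑' k : ℕ, z ^ (2 * k + 1) / (2 * k + 1).factorial +
        (n + 1).factorial * ∑' k : ℕ, z ^ (2 * k + (n + 1)) / (2 * k + (n + 1)).factorial) := by
    rw [besselI, ← tsum_mul_left, ← tsum_mul_left, ← hs3.tsum_add (hs4.mul_left _),
      ← tsum_mul_left]
    exact hsL.tsum_le_tsum hle hsR
  have hbound : ∀ B : ℝ, ∑' k : ℕ, z ^ (2 * k + 1) / (2 * k + 1).factorial ≤ B →
      ∑' k : ℕ, z ^ (2 * k + (n + 1)) / (2 * k + (n + 1)).factorial ≤ B →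
      √z * besselI (lam - 1 / 2) z ≤ 2 * (1 + 2 * lam) * (1 + (n + 1).factorial) * B := by
    intro B h1 h2
    calc _ ≤ _ := hmain
      _ ≤ 2 * (1 + 2 * lam) * (B + (n + 1).factorial * B) := by gcongr
      _ = _ := by ring
  exact ⟨hbound _ (tsum_pow_div_factorial_comp_le hz.le hinj3)
      (tsum_pow_div_factorial_comp_le hz.le hinj4),
    hbound _ (tsum_pow_succ_div_factorial_comp_le hz.le hinj1)
      (tsum_pow_succ_div_factorial_comp_le hz.le hinj2)⟩

lemma besselHeatKernel_nonneg {lam t x y : ℝ} (hlam : 0 < lam) (ht : 0 < t) (hx : 0 < x)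
    (hy : 0 < y) : 0 ≤ besselHeatKernel lam t x y := by
  have : 0 ≤ besselI (lam - 1 / 2) (x * y / (2 * t)) :=
    tsum_nonneg (besselI_term_nonneg (by linarith) (by positivity))
  unfold besselHeatKernel
  positivity

lemma besselHeatKernel_eq {lam t x y : ℝ} (ht : 0 < t) (hx : 0 < x) (hy : 0 < y) :
    besselHeatKernel lam t x y = (1 / √(2 * t)) *
      (√(x * y / (2 * t)) * besselI (lam - 1 / 2) (x * y / (2 * t))) *
      (Real.exp (-(x * y / (2 * t))) * Real.exp (-(x - y) ^ 2 / (4 * t))) := by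
  rw [besselHeatKernel, ← Real.exp_add, Real.sqrt_div (by positivity)]
  rw [show -(x ^ 2 + y ^ 2) / (4 * t) = -(x * y / (2 * t)) + -(x - y) ^ 2 / (4 * t) by
    field_simp; ring]
  have h : 2 * t = √(2 * t) * √(2 * t) := (Real.mul_self_sqrt (by positivity)).symm
  have : √(x * y) / (2 * t) = 1 / √(2 * t) * (√(x * y) / √(2 * t)) := by
    rw [div_mul_div_comm, ← h, one_mul]
  rw [this]
  ring

/-- Gaussian upper bounds for the Bessel heat kernel, without and with decay at `y = 0`. -/
lemma exists_besselHeatKernel_bound {lam : ℝ} (hlam : 1 ≤ lam) :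
    ∃ C : ℝ, 0 < C ∧ ∀ t x y : ℝ, 0 < t → 0 < x → 0 < y →
      besselHeatKernel lam t x y ≤ C / √t * Real.exp (-(x - y) ^ 2 / (4 * t)) ∧
      besselHeatKernel lam t x y ≤
        C / √t * (x * y / t) * Real.exp (-(x - y) ^ 2 / (4 * t)) := by
  obtain ⟨C, hC, hb⟩ := exists_besselI_bound hlam
  refine ⟨C, hC, fun t x y ht hx hy => ?_⟩
  have hz : 0 < x * y / (2 * t) := by positivity
  have hsq : 1 / √(2 * t) ≤ 1 / √t := by gcongr; linarith
  obtain ⟨h1, h2⟩ := hb _ hz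
  have hmul : ∀ B : ℝ, 0 ≤ B → √(x * y / (2 * t)) * besselI (lam - 1 / 2) (x * y / (2 * t)) ≤
      C * (B * Real.exp (x * y / (2 * t))) → besselHeatKernel lam t x y ≤
      C / √t * B * Real.exp (-(x - y) ^ 2 / (4 * t)) := by
    intro B hB h
    rw [besselHeatKernel_eq ht hx hy]
    calc _ ≤ (1 / √t) * (C * (B * Real.exp (x * y / (2 * t)))) *
      (Real.exp (-(x * y / (2 * t))) * Real.exp (-(x - y) ^ 2 / (4 * t))) := by
          have : 0 ≤ besselI (lam - 1 / 2) (x * y / (2 * t)) :=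
            tsum_nonneg (besselI_term_nonneg (by linarith) hz.le)
          gcongr
      _ = C / √t * B * (Real.exp (x * y / (2 * t)) * Real.exp (-(x * y / (2 * t)))) *
          Real.exp (-(x - y) ^ 2 / (4 * t)) := by ring
      _ = _ := by rw [← Real.exp_add, add_neg_cancel, Real.exp_zero, mul_one]
  refine ⟨by simpa using hmul 1 zero_le_one (by simpa using h1), hmul _ (by positivity) ?_⟩
  refine h2.trans ?_
  gcongr
  linarith

lemma integral_besselHeatKernel_mul_rpow {lam t x : ℝ} (hlam : 0 < lam) (ht : 0 < t)
    (hx : 0 < x) :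
    ∫ y in Ioi (0 : ℝ), besselHeatKernel lam t x y * y ^ lam = x ^ lam := by
  have hΓ : ∀ k : ℕ, 0 < Real.Gamma ((k : ℝ) + (lam - 1 / 2) + 1) := fun k =>
    Real.Gamma_pos_of_pos (by linarith [Nat.cast_nonneg (α := ℝ) k])
  set c : ℕ → ℝ := fun k => √x / (2 * t) * (x / (4 * t)) ^ (2 * (k : ℝ) + (lam - 1 / 2)) /
    ((k.factorial : ℝ) * Real.Gamma ((k : ℝ) + (lam - 1 / 2) + 1)) * Real.exp (-x ^ 2 / (4 * t))
    with hc
  have hc0 : ∀ k, 0 ≤ c k := fun k => by have := hΓ k; positivity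
  set F : ℕ → ℝ → ℝ := fun k y =>
    c k * (y ^ (2 * (k : ℝ) + 2 * lam) * Real.exp (-(1 / (4 * t)) * y ^ (2 : ℝ))) with hF
  have hker : ∀ y ∈ Ioi (0 : ℝ), besselHeatKernel lam t x y * y ^ lam = ∑' k, F k y := by
    intro y hy
    have hy : 0 < y := hy
    rw [besselHeatKernel, besselI, ← tsum_mul_left, ← tsum_mul_right, ← tsum_mul_right]
    refine tsum_congr fun k => ?_
    simp only [hF, hc]
    rw [show x * y / (2 * t) / 2 = x / (4 * t) * y by field_simp; ring,
      Real.mul_rpow (by positivity) hy.le, Real.sqrt_mul hx.le,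
      show -(x ^ 2 + y ^ 2) / (4 * t) = -x ^ 2 / (4 * t) + -(1 / (4 * t)) * y ^ 2 by
        field_simp; ring, Real.exp_add, Real.rpow_two,
      show 2 * (k : ℝ) + 2 * lam = 1 / 2 + (2 * (k : ℝ) + (lam - 1 / 2)) + lam by ring,
      Real.rpow_add hy _ lam, Real.rpow_add hy (1 / 2), ← Real.sqrt_eq_rpow]
    ring
  have hb : 0 < 1 / (4 * t) := by positivity
  have hint : ∀ k, IntegrableOn (F k) (Ioi 0) := fun k =>
    (integrableOn_rpow_mul_exp_neg_mul_rpow (by linarith [Nat.cast_nonneg (α := ℝ) k])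
      two_pos hb).const_mul (c k)
  have hval : ∀ k, ∫ y in Ioi (0 : ℝ), F k y =
      x ^ lam * Real.exp (-x ^ 2 / (4 * t)) * ((x ^ 2 / (4 * t)) ^ k / k.factorial) := by
    intro k
    have hT : 0 < 4 * t := by positivity
    have := hΓ k
    simp only [hF]
    rw [integral_const_mul, integral_rpow_mul_exp_neg_mul_rpow two_pos
      (by linarith [Nat.cast_nonneg (α := ℝ) k]) hb]
    rw [show (2 * (k : ℝ) + 2 * lam + 1) / 2 = (k : ℝ) + (lam - 1 / 2) + 1 by ring,
      show -(2 * (k : ℝ) + 2 * lam + 1) / 2 = -((k : ℝ) + lam + 1 / 2) by ring,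
      one_div (4 * t), Real.inv_rpow hT.le, Real.rpow_neg hT.le, inv_inv]
    simp only [hc]
    generalize Real.Gamma ((k : ℝ) + (lam - 1 / 2) + 1) = g at this
    have h1 : √x * (x / (4 * t)) ^ (2 * (k : ℝ) + (lam - 1 / 2)) * (4 * t) ^ ((k : ℝ) + lam + 1 / 2)
        = x ^ lam * (x ^ 2 / (4 * t)) ^ k * (4 * t) := by
      rw [Real.div_rpow hx.le hT.le, Real.sqrt_eq_rpow, ← mul_div_assoc, ← Real.rpow_add hx,
        show 1 / 2 + (2 * (k : ℝ) + (lam - 1 / 2)) = lam + ((2 * k : ℕ) : ℝ) by push_cast; ring,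
        Real.rpow_add hx, Real.rpow_natCast, div_mul_eq_mul_div, mul_div_assoc,
        ← Real.rpow_sub hT,
        show (k : ℝ) + lam + 1 / 2 - (2 * (k : ℝ) + (lam - 1 / 2)) = 1 - (k : ℝ) by ring,
        Real.rpow_sub hT, Real.rpow_one, Real.rpow_natCast, div_pow, ← pow_mul]
      ring
    calc _ = (√x * (x / (4 * t)) ^ (2 * (k : ℝ) + (lam - 1 / 2)) *
          (4 * t) ^ ((k : ℝ) + lam + 1 / 2)) * Real.exp (-x ^ 2 / (4 * t)) /
          (4 * t * k.factorial) := by field_simp; ring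
      _ = _ := by rw [h1]; field_simp
  have hnorm : ∀ k, ∫ y in Ioi (0 : ℝ), ‖F k y‖ = ∫ y in Ioi (0 : ℝ), F k y := fun k =>
    setIntegral_congr_fun measurableSet_Ioi fun y hy => by
      have hy : 0 < y := hy
      have := hc0 k
      exact Real.norm_of_nonneg (by simp only [hF]; positivity)
  have hsum := (Real.summable_pow_div_factorial (x ^ 2 / (4 * t))).mul_left
    (x ^ lam * Real.exp (-x ^ 2 / (4 * t)))
  rw [setIntegral_congr_fun measurableSet_Ioi hker,
    ← integral_tsum_of_summable_integral_norm hint (by simpa only [hnorm, hval] using hsum)]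
  simp only [hval]
  rw [tsum_mul_left, Real.tsum_pow_div_factorial, mul_assoc, ← Real.exp_add, neg_div,
    neg_add_cancel, Real.exp_zero, mul_one]

lemma measurable_besselHeatKernel (lam x : ℝ) :
    Measurable fun p : ℝ × ℝ => besselHeatKernel lam p.1 x p.2 := by
  have hI : Measurable (besselI (lam - 1 / 2)) := by
    unfold besselI
    exact Measurable.tsum fun k => by fun_prop
  unfold besselHeatKernel
  fun_prop

lemma measurable_besselHeatKernel_right (lam t x : ℝ) :
    Measurable fun y => besselHeatKernel lam t x y :=
  (measurable_besselHeatKernel lam x).comp (measurable_const.prodMk measurable_id)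

lemma aestronglyMeasurable_heatSemigroup {lam x : ℝ} {u : ℝ → ℝ}
    (hu : ContinuousOn u (Ioi 0)) :
    AEStronglyMeasurable (fun t => heatSemigroup lam u t x) (volume.restrict (Ioi 0)) := by
  have hum : AEStronglyMeasurable u (volume.restrict (Ioi 0)) :=
    hu.aestronglyMeasurable measurableSet_Ioi
  have h : AEStronglyMeasurable (fun p : ℝ × ℝ => besselHeatKernel lam p.1 x p.2 * u p.2)
      ((volume.restrict (Ioi (0 : ℝ))).prod (volume.restrict (Ioi 0))) :=
    (measurable_besselHeatKernel lam x).aestronglyMeasurable.mul hum.comp_snd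
  exact h.integral_prod_right'

lemma integrable_exp_neg_sub_sq_div (x : ℝ) {b : ℝ} (hb : 0 < b) :
    Integrable fun y => Real.exp (-(x - y) ^ 2 / b) := by
  have h := (integrable_exp_neg_mul_sq (b := 1 / b) (by positivity)).comp_sub_left x
  refine h.congr (ae_of_all _ fun y => ?_)
  simp only
  congr 1
  ring

lemma integral_exp_neg_sub_sq_div (x b : ℝ) :
    ∫ y, Real.exp (-(x - y) ^ 2 / b) = √(π * b) := by
  have h := integral_sub_left_eq_self (fun y => Real.exp (-(1 / b) * y ^ 2)) volume x
  rw [integral_gaussian] at h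
  rw [show π * b = π / (1 / b) by simp, ← h]
  congr 1 with y
  congr 1
  ring

lemma exists_holder_bound {α : ℝ} {u : ℝ → ℝ} (hα : 0 < α) (hu : BddAbove (holderRatioSet α u)) :
    ∃ A : ℝ, 0 ≤ A ∧ ∀ x y : ℝ, 0 < x → 0 < y → |u x - u y| ≤ A * |x - y| ^ α := by
  obtain ⟨A, hA⟩ := hu
  refine ⟨max A 0, le_max_right _ _, fun x y hx hy => ?_⟩
  rcases eq_or_ne x y with rfl | hxy
  · simp [Real.zero_rpow hα.ne']
  have hpos : 0 < |x - y| ^ α := Real.rpow_pos_of_pos (abs_pos.2 (sub_ne_zero.2 hxy)) α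
  have := hA ⟨x, y, hx, hy, hxy, rfl⟩
  rw [div_le_iff₀ hpos] at this
  exact this.trans (by gcongr; exact le_max_left _ _)

lemma abs_one_sub_rpow_le {r p : ℝ} {m : ℕ} (hr : 0 < r) (hm : p ≤ m) (hp : 0 ≤ p) :
    |1 - r ^ p| ≤ |1 - r ^ m| := by
  rcases le_total r 1 with h | h
  · have h1 := Real.rpow_le_rpow_of_exponent_ge hr h hm
    rw [Real.rpow_natCast] at h1
    have h2 := Real.rpow_le_one hr.le h hp
    rw [abs_of_nonneg (by linarith), abs_of_nonneg (by linarith)]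
    linarith
  · have h1 := Real.rpow_le_rpow_of_exponent_le h hm
    rw [Real.rpow_natCast] at h1
    have h2 := Real.one_le_rpow h hp
    rw [abs_of_nonpos (by linarith), abs_of_nonpos (by linarith)]
    linarith

lemma le_rpow_mul_one_add {d α : ℝ} (hd : 0 ≤ d) (hα0 : 0 < α) (hα1 : α < 1) :
    d ≤ d ^ α * (1 + d) := by
  rcases le_total d 1 with h | h
  · rcases hd.eq_or_lt with rfl | hd0
    · simp [Real.zero_rpow hα0.ne']
    · have := Real.rpow_le_rpow_of_exponent_ge hd0 h hα1.le
      rw [Real.rpow_one] at this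
      nlinarith
  · have := Real.one_le_rpow h hα0.le
    nlinarith

lemma one_add_pow_le_exp_sq {d : ℝ} (hd : 0 ≤ d) (n : ℕ) :
    (1 + d) ^ n ≤ n.factorial * Real.exp 5 * Real.exp (d ^ 2 / 16) := by
  have h := Real.pow_div_factorial_le_exp (x := 1 + d) (by positivity) n
  rw [div_le_iff₀ (by positivity)] at h
  have h2 : Real.exp (1 + d) ≤ Real.exp 5 * Real.exp (d ^ 2 / 16) := by
    rw [← Real.exp_add]
    exact Real.exp_le_exp.2 (by nlinarith [sq_nonneg (d - 8)])
  calc _ ≤ _ := h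
    _ ≤ Real.exp 5 * Real.exp (d ^ 2 / 16) * n.factorial := by gcongr
    _ = _ := by ring

lemma exists_abs_one_sub_div_rpow_le {lam α x : ℝ} (hlam : 0 ≤ lam) (hα0 : 0 < α) (hα1 : α < 1)
    (hx : 0 < x) :
    ∃ D : ℝ, 0 ≤ D ∧ ∀ y : ℝ, 0 < y →
      |1 - (y / x) ^ lam| ≤ D * (|x - y| ^ α * Real.exp ((x - y) ^ 2 / 16)) := by
  obtain ⟨m, hm⟩ := exists_nat_ge lam
  refine ⟨m / x * (1 + 1 / x) ^ m * ((m + 1).factorial * Real.exp 5), by positivity,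
    fun y hy => ?_⟩
  refine (abs_one_sub_rpow_le (by positivity) hm hlam).trans ?_
  have h1 := abs_pow_sub_pow_le (1 : ℝ) (y / x) m
  rw [one_pow] at h1
  set d := |x - y| with hd
  have hd0 : 0 ≤ d := abs_nonneg _
  have hr : |1 - y / x| = d / x := by
    rw [hd, one_sub_div hx.ne', abs_div, abs_of_pos hx]
  have hmax : max |(1 : ℝ)| |y / x| ≤ (1 + 1 / x) * (1 + d) := by
    refine max_le ?_ ?_
    · rw [abs_one]; nlinarith [one_div_pos.2 hx, mul_nonneg (one_div_pos.2 hx).le hd0]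
    · rw [abs_of_pos (by positivity)]
      have h2 : y ≤ x + d := by linarith [neg_abs_le (x - y)]
      calc y / x ≤ (x + d) / x := by gcongr
        _ = 1 + 1 / x * d := by field_simp
        _ ≤ _ := by nlinarith [one_div_pos.2 hx, mul_nonneg (one_div_pos.2 hx).le hd0]
  have hbase : 1 ≤ (1 + 1 / x) * (1 + d) := by
    nlinarith [one_div_pos.2 hx, mul_nonneg (one_div_pos.2 hx).le hd0]
  have hpow : max |(1 : ℝ)| |y / x| ^ (m - 1) ≤ (1 + 1 / x) ^ m * (1 + d) ^ m := by
    rw [← mul_pow]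
    calc _ ≤ ((1 + 1 / x) * (1 + d)) ^ (m - 1) := by gcongr
      _ ≤ _ := pow_le_pow_right₀ hbase (Nat.sub_le _ _)
  have hdα := le_rpow_mul_one_add hd0 hα0 hα1
  have hexp := one_add_pow_le_exp_sq hd0 (m + 1)
  rw [hr] at h1
  have hsq : d ^ 2 = (x - y) ^ 2 := sq_abs _
  calc |1 - (y / x) ^ m| ≤ d / x * m * max |(1 : ℝ)| |y / x| ^ (m - 1) := h1
    _ ≤ (d ^ α * (1 + d)) / x * m * ((1 + 1 / x) ^ m * (1 + d) ^ m) := by gcongr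
    _ = m / x * (1 + 1 / x) ^ m * d ^ α * (1 + d) ^ (m + 1) := by ring
    _ ≤ m / x * (1 + 1 / x) ^ m * d ^ α *
        ((m + 1).factorial * Real.exp 5 * Real.exp (d ^ 2 / 16)) := by gcongr
    _ = _ := by rw [hsq]; ring

lemma exists_deviation_bound {lam α x : ℝ} {u : ℝ → ℝ} (hlam : 0 ≤ lam) (hα0 : 0 < α)
    (hα1 : α < 1) (hu : BddAbove (holderRatioSet α u)) (hx : 0 < x) :
    ∃ D : ℝ, 0 ≤ D ∧ ∀ y : ℝ, 0 < y →
      |u y - u x * (y / x) ^ lam| ≤ D * (|x - y| ^ α * Real.exp ((x - y) ^ 2 / 16)) := by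
  obtain ⟨A, hA0, hA⟩ := exists_holder_bound hα0 hu
  obtain ⟨D, hD0, hD⟩ := exists_abs_one_sub_div_rpow_le hlam hα0 hα1 hx
  refine ⟨A + |u x| * D, by positivity, fun y hy => ?_⟩
  have h1 : 1 ≤ Real.exp ((x - y) ^ 2 / 16) := Real.one_le_exp (by positivity)
  calc |u y - u x * (y / x) ^ lam| = |(u y - u x) + u x * (1 - (y / x) ^ lam)| := by ring_nf
    _ ≤ |u x - u y| + |u x| * |1 - (y / x) ^ lam| := by
        rw [abs_sub_comm (u x), ← abs_mul]; exact abs_add_le _ _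
    _ ≤ A * (|x - y| ^ α * Real.exp ((x - y) ^ 2 / 16)) +
        |u x| * (D * (|x - y| ^ α * Real.exp ((x - y) ^ 2 / 16))) := by
        gcongr
        · exact (hA x y hx hy).trans (by
            gcongr; exact le_mul_of_one_le_right (by positivity) h1)
        · exact hD y hy
    _ = _ := by ring

lemma rpow_le_rpow_mul_exp {d t α : ℝ} (hd : 0 ≤ d) (ht : 0 < t) (hα0 : 0 < α) (hα1 : α < 1) :
    d ^ α ≤ 8 * t ^ (α / 2) * Real.exp (d ^ 2 / (8 * t)) := by
  have hs : 0 ≤ d ^ 2 / t := by positivity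
  have h1 : (d ^ 2 / t) ^ (α / 2) ≤ 1 + d ^ 2 / t := by
    rcases le_total (d ^ 2 / t) 1 with h | h
    · linarith [Real.rpow_le_one hs h (by positivity : 0 ≤ α / 2)]
    · have := Real.rpow_le_rpow_of_exponent_le h (by linarith : α / 2 ≤ 1)
      rw [Real.rpow_one] at this
      linarith
  have h2 : 1 + d ^ 2 / t ≤ 8 * Real.exp (d ^ 2 / (8 * t)) := by
    have := Real.add_one_le_exp (d ^ 2 / (8 * t))
    have h3 : d ^ 2 / (8 * t) = d ^ 2 / t / 8 := by field_simp
    rw [h3] at this ⊢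
    linarith
  have h4 : d ^ α = t ^ (α / 2) * (d ^ 2 / t) ^ (α / 2) := by
    rw [← Real.mul_rpow ht.le hs, mul_div_cancel₀ _ ht.ne', ← Real.rpow_natCast,
      ← Real.rpow_mul hd]
    congr 1
    push_cast
    ring
  rw [h4]
  calc _ ≤ t ^ (α / 2) * (8 * Real.exp (d ^ 2 / (8 * t))) := by
        gcongr; exact h1.trans h2
    _ = _ := by ring

lemma integrableOn_besselHeatKernel_mul {lam t x M : ℝ} {u : ℝ → ℝ} (hlam : 1 ≤ lam)
    (ht : 0 < t) (hx : 0 < x) (hu : ContinuousOn u (Ioi 0)) (hM : ∀ y ∈ Ioi (0 : ℝ), |u y| ≤ M) :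
    IntegrableOn (fun y => besselHeatKernel lam t x y * u y) (Ioi 0) := by
  obtain ⟨C, hC, hb⟩ := exists_besselHeatKernel_bound hlam
  have hg : IntegrableOn (fun y => C / √t * M * Real.exp (-(x - y) ^ 2 / (4 * t))) (Ioi 0) :=
    ((integrable_exp_neg_sub_sq_div x (by positivity : 0 < 4 * t)).const_mul _).integrableOn
  refine Integrable.mono' hg ((measurable_besselHeatKernel_right lam t x).aestronglyMeasurable.mul
    (hu.aestronglyMeasurable measurableSet_Ioi)) ?_
  filter_upwards [ae_restrict_mem measurableSet_Ioi] with y hy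
  rw [norm_mul, Real.norm_of_nonneg (besselHeatKernel_nonneg (by linarith) ht hx hy),
    Real.norm_eq_abs]
  calc _ ≤ (C / √t * Real.exp (-(x - y) ^ 2 / (4 * t))) * M :=
        mul_le_mul (hb t x y ht hx hy).1 (hM y hy) (abs_nonneg _) (by positivity)
    _ = _ := by ring

/-- Convergence of the heat semigroup to the identity as `t → 0`, with a rate. The comparison
function `y ↦ u x * (y / x) ^ lam` is used because `y ↦ y ^ lam` is invariant. -/
lemma exists_heatSemigroup_sub_bound {lam α x M : ℝ} {u : ℝ → ℝ} (hlam : 1 ≤ lam)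
    (hα0 : 0 < α) (hα1 : α < 1) (hu : ContinuousOn u (Ioi 0))
    (hM : ∀ y ∈ Ioi (0 : ℝ), |u y| ≤ M) (hH : BddAbove (holderRatioSet α u)) (hx : 0 < x) :
    ∃ C : ℝ, ∀ t ∈ Ioc (0 : ℝ) 1, |heatSemigroup lam u t x - u x| ≤ C * t ^ (α / 2) := by
  obtain ⟨C, hC, hb⟩ := exists_besselHeatKernel_bound hlam
  obtain ⟨D, hD0, hD⟩ := exists_deviation_bound (lam := lam) (by linarith) hα0 hα1 hH hx
  refine ⟨C * D * 8 * √(π * 16), fun t ⟨ht, ht1⟩ => ?_⟩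
  have hWu := integrableOn_besselHeatKernel_mul (lam := lam) hlam ht hx hu hM
  set h : ℝ → ℝ := fun y => u y - u x * (y / x) ^ lam with hh
  have hhm : AEStronglyMeasurable h (volume.restrict (Ioi 0)) :=
    (hu.aestronglyMeasurable measurableSet_Ioi).sub
      (Measurable.aestronglyMeasurable (by fun_prop))
  have hg := ((integrable_exp_neg_sub_sq_div x (by positivity : 0 < 16 * t)).const_mul
    (C / √t * (D * 8 * t ^ (α / 2))))
  have hle : ∀ᵐ y ∂(volume.restrict (Ioi (0 : ℝ))), ‖besselHeatKernel lam t x y * h y‖ ≤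
      C / √t * (D * 8 * t ^ (α / 2)) * Real.exp (-(x - y) ^ 2 / (16 * t)) := by
    filter_upwards [ae_restrict_mem measurableSet_Ioi] with y hy
    rw [norm_mul, Real.norm_of_nonneg (besselHeatKernel_nonneg (by linarith) ht hx hy),
      Real.norm_eq_abs]
    have h1 := rpow_le_rpow_mul_exp (abs_nonneg (x - y)) ht hα0 hα1
    rw [sq_abs] at h1
    have h2 : Real.exp ((x - y) ^ 2 / 16) ≤ Real.exp ((x - y) ^ 2 / (16 * t)) := by
      gcongr
      linarith
    calc _ ≤ (C / √t * Real.exp (-(x - y) ^ 2 / (4 * t))) *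
          (D * ((8 * t ^ (α / 2) * Real.exp ((x - y) ^ 2 / (8 * t))) *
            Real.exp ((x - y) ^ 2 / (16 * t)))) := by
          refine mul_le_mul (hb t x y ht hx hy).1 ((hD y hy).trans ?_) (abs_nonneg _)
            (by positivity)
          gcongr
      _ = C / √t * (D * 8 * t ^ (α / 2)) * (Real.exp (-(x - y) ^ 2 / (4 * t)) *
          Real.exp ((x - y) ^ 2 / (8 * t)) * Real.exp ((x - y) ^ 2 / (16 * t))) := by ring
      _ = _ := by
          rw [← Real.exp_add, ← Real.exp_add]
          congr 2
          field_simp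
          ring
  have hWh : IntegrableOn (fun y => besselHeatKernel lam t x y * h y) (Ioi 0) :=
    Integrable.mono' hg.integrableOn
      ((measurable_besselHeatKernel_right lam t x).aestronglyMeasurable.mul hhm) hle
  have hxl : x ^ lam ≠ 0 := (Real.rpow_pos_of_pos hx lam).ne'
  have hinv : ∫ y in Ioi (0 : ℝ), (besselHeatKernel lam t x y * u y -
      besselHeatKernel lam t x y * h y) = u x := by
    calc _ = ∫ y in Ioi (0 : ℝ), u x / x ^ lam * (besselHeatKernel lam t x y * y ^ lam) := by
          refine setIntegral_congr_fun measurableSet_Ioi fun y hy => ?_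
          have hy : 0 < y := hy
          simp only [hh]
          rw [Real.div_rpow hy.le hx.le]
          ring
      _ = u x := by
          rw [integral_const_mul, integral_besselHeatKernel_mul_rpow (by linarith) ht hx,
            div_mul_cancel₀ _ hxl]
  rw [integral_sub hWu hWh] at hinv
  have heq : heatSemigroup lam u t x - u x =
      ∫ y in Ioi (0 : ℝ), besselHeatKernel lam t x y * h y := by
    rw [heatSemigroup]; linarith
  rw [heq, ← Real.norm_eq_abs]
  refine (norm_integral_le_of_norm_le hg.integrableOn hle).trans ?_
  refine (setIntegral_le_integral hg (ae_of_all _ fun y => by positivity)).trans ?_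
  rw [integral_const_mul, integral_exp_neg_sub_sq_div,
    show π * (16 * t) = π * 16 * t by ring, Real.sqrt_mul (by positivity)]
  have : √t ≠ 0 := (Real.sqrt_pos.2 ht).ne'
  apply le_of_eq
  field_simp

lemma exists_heatSemigroup_bound {lam x : ℝ} {u : ℝ → ℝ} (hlam : 1 ≤ lam)
    (huL : IntegrableOn (fun y => |u y| / (1 + y)) (Ioi 0)) (hx : 0 < x) :
    ∃ C : ℝ, ∀ t ∈ Ioi (1 : ℝ), |heatSemigroup lam u t x| ≤ C * t ^ (-(1 / 2) : ℝ) := by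
  obtain ⟨C, hC, hb⟩ := exists_besselHeatKernel_bound hlam
  refine ⟨C * x * (17 + 4 * x ^ 2) * ∫ y in Ioi (0 : ℝ), |u y| / (1 + y), fun t ht1 => ?_⟩
  have ht1 : 1 < t := ht1
  have ht : 0 < t := by linarith
  rw [Real.rpow_neg ht.le, ← Real.sqrt_eq_rpow, ← Real.norm_eq_abs, heatSemigroup]
  refine (norm_integral_le_of_norm_le (huL.const_mul (C * x * (17 + 4 * x ^ 2) * (√t)⁻¹))
    ?_).trans (le_of_eq ?_)
  · filter_upwards [ae_restrict_mem measurableSet_Ioi] with y hy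
    have hy : 0 < y := hy
    rw [norm_mul, Real.norm_of_nonneg (besselHeatKernel_nonneg (by linarith) ht hx hy),
      Real.norm_eq_abs]
    set e := Real.exp (-(x - y) ^ 2 / (4 * t)) with he
    have he1 : e ≤ 1 := Real.exp_le_one_iff.2 (by
      rw [neg_div]; exact neg_nonpos.2 (by positivity))
    have he0 : 0 < e := Real.exp_pos _
    have hs : (x - y) ^ 2 / (4 * t) * e ≤ 1 := by
      have := Real.add_one_le_exp ((x - y) ^ 2 / (4 * t))
      rw [he, neg_div, Real.exp_neg, ← div_eq_mul_inv, div_le_one (Real.exp_pos _)]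
      linarith
    have hs' : (x - y) ^ 2 * e ≤ 4 * t := by
      rw [div_mul_eq_mul_div, div_le_one (by positivity)] at hs
      exact hs
    have hyy : y * (1 + y) * e ≤ (17 + 4 * x ^ 2) * t := by
      have h1 : y * (1 + y) ≤ 1 + 4 * x ^ 2 + 4 * (x - y) ^ 2 := by
        nlinarith [sq_nonneg (y - 1), sq_nonneg (2 * x - y)]
      calc y * (1 + y) * e ≤ (1 + 4 * x ^ 2 + 4 * (x - y) ^ 2) * e := by gcongr
        _ = (1 + 4 * x ^ 2) * e + 4 * ((x - y) ^ 2 * e) := by ring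
        _ ≤ (1 + 4 * x ^ 2) * t + 4 * (4 * t) := by gcongr; linarith
        _ = _ := by ring
    calc _ ≤ (C / √t * (x * y / t) * e) * |u y| := by
          gcongr; exact (hb t x y ht hx hy).2
      _ = C * x * (√t)⁻¹ / t * (y * (1 + y) * e) * (|u y| / (1 + y)) := by field_simp
      _ ≤ C * x * (√t)⁻¹ / t * ((17 + 4 * x ^ 2) * t) * (|u y| / (1 + y)) := by gcongr
      _ = _ := by field_simp
  · rw [integral_const_mul]; ring

/-- If `G` vanishes at a polynomial rate at `0` and tends to `-c` at a polynomial rate at `∞`,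
then `σ ∫₀^∞ G(t) t^{-1-σ} dt → -c` as `σ → 0⁺`. -/
lemma tendsto_mul_integral_rpow {G : ℝ → ℝ} {c a b C₀ C₁ : ℝ} (ha : 0 < a) (hb : 0 < b)
    (hG : AEStronglyMeasurable G (volume.restrict (Ioi 0)))
    (h0 : ∀ t ∈ Ioc (0 : ℝ) 1, |G t| ≤ C₀ * t ^ a)
    (h1 : ∀ t ∈ Ioi (1 : ℝ), |G t + c| ≤ C₁ * t ^ (-b)) :
    Tendsto (fun σ : ℝ => σ * ∫ t in Ioi (0 : ℝ), G t * t ^ (-1 - σ))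
      (nhdsWithin 0 (Ioi 0)) (nhds (-c)) := by
  have hC0 : 0 ≤ C₀ := by simpa using (abs_nonneg _).trans (h0 1 ⟨one_pos, le_rfl⟩)
  have hC1 : 0 ≤ C₁ := by
    have h := (abs_nonneg _).trans (h1 2 (mem_Ioi.2 one_lt_two))
    exact nonneg_of_mul_nonneg_left h (by positivity)
  have key : ∀ σ ∈ Ioo (0 : ℝ) (a / 2),
      |σ * (∫ t in Ioi (0 : ℝ), G t * t ^ (-1 - σ)) - -c| ≤ σ * (2 * C₀ / a + C₁ / b) := by
    rintro σ ⟨hσ, hσa⟩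
    have hm : AEStronglyMeasurable (fun t => t ^ (-1 - σ)) (volume.restrict (Ioi (0 : ℝ))) :=
      Measurable.aestronglyMeasurable (by fun_prop)
    have hsub0 : Ioc (0 : ℝ) 1 ⊆ Ioi 0 := fun t ht => ht.1
    have hsub1 : Ioi (1 : ℝ) ⊆ Ioi 0 := Ioi_subset_Ioi zero_le_one
    have hg0 : IntegrableOn (fun t : ℝ => C₀ * t ^ (a / 2 - 1)) (Ioc 0 1) := by
      rw [← intervalIntegrable_iff_integrableOn_Ioc_of_le zero_le_one]
      exact (intervalIntegral.intervalIntegrable_rpow' (by linarith)).const_mul C₀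
    have hle0 : ∀ᵐ t ∂(volume.restrict (Ioc (0 : ℝ) 1)),
        ‖G t * t ^ (-1 - σ)‖ ≤ C₀ * t ^ (a / 2 - 1) := by
      filter_upwards [ae_restrict_mem measurableSet_Ioc] with t ht
      have ht0 : 0 < t := ht.1
      rw [norm_mul, Real.norm_of_nonneg (Real.rpow_nonneg ht0.le _), Real.norm_eq_abs]
      calc _ ≤ C₀ * t ^ a * t ^ (-1 - σ) := by gcongr; exact h0 t ht
        _ = C₀ * t ^ (a + (-1 - σ)) := by rw [mul_assoc, ← Real.rpow_add ht0]
        _ ≤ _ := by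
          gcongr C₀ * ?_
          exact Real.rpow_le_rpow_of_exponent_ge ht0 ht.2 (by linarith)
    have hg1 : IntegrableOn (fun t : ℝ => C₁ * t ^ (-b - 1)) (Ioi 1) :=
      (integrableOn_Ioi_rpow_of_lt (by linarith) one_pos).const_mul C₁
    have hle1 : ∀ᵐ t ∂(volume.restrict (Ioi (1 : ℝ))),
        ‖(G t + c) * t ^ (-1 - σ)‖ ≤ C₁ * t ^ (-b - 1) := by
      filter_upwards [ae_restrict_mem measurableSet_Ioi] with t ht
      have ht1 : 1 < t := ht
      have ht0 : 0 < t := by linarith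
      rw [norm_mul, Real.norm_of_nonneg (Real.rpow_nonneg ht0.le _), Real.norm_eq_abs]
      calc _ ≤ C₁ * t ^ (-b) * t ^ (-1 - σ) := by gcongr; exact h1 t ht
        _ = C₁ * t ^ (-b + (-1 - σ)) := by rw [mul_assoc, ← Real.rpow_add ht0]
        _ ≤ _ := by
          gcongr C₁ * ?_
          exact Real.rpow_le_rpow_of_exponent_le ht1.le (by linarith)
    have hi0 : IntegrableOn (fun t => G t * t ^ (-1 - σ)) (Ioc 0 1) :=
      Integrable.mono' hg0 ((hG.mul hm).mono_measure (Measure.restrict_mono hsub0 le_rfl)) hle0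
    have hi1 : IntegrableOn (fun t => (G t + c) * t ^ (-1 - σ)) (Ioi 1) :=
      Integrable.mono' hg1 (((hG.add aestronglyMeasurable_const).mul hm).mono_measure
        (Measure.restrict_mono hsub1 le_rfl)) hle1
    have hi2 : IntegrableOn (fun t : ℝ => c * t ^ (-1 - σ)) (Ioi 1) :=
      (integrableOn_Ioi_rpow_of_lt (by linarith) one_pos).const_mul c
    have hfun : (fun t => G t * t ^ (-1 - σ)) =
        fun t => (G t + c) * t ^ (-1 - σ) - c * t ^ (-1 - σ) := by
      ext t; ring
    have hi3 : IntegrableOn (fun t => G t * t ^ (-1 - σ)) (Ioi 1) := hfun ▸ hi1.sub hi2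
    have hv2 : ∫ t in Ioi (1 : ℝ), c * t ^ (-1 - σ) = c / σ := by
      rw [integral_const_mul, integral_Ioi_rpow_of_lt (by linarith) one_pos, Real.one_rpow]
      rw [show -1 - σ + 1 = -σ by ring, neg_div_neg_eq]
      ring
    have hn0 : ‖∫ t in Ioc (0 : ℝ) 1, G t * t ^ (-1 - σ)‖ ≤ 2 * C₀ / a := by
      refine (norm_integral_le_of_norm_le hg0 hle0).trans (le_of_eq ?_)
      rw [integral_const_mul, ← intervalIntegral.integral_of_le zero_le_one,
        integral_rpow (Or.inl (by linarith)), Real.one_rpow, sub_add_cancel,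
        Real.zero_rpow (half_pos ha).ne', sub_zero]
      field_simp
    have hn1 : ‖∫ t in Ioi (1 : ℝ), (G t + c) * t ^ (-1 - σ)‖ ≤ C₁ / b := by
      refine (norm_integral_le_of_norm_le hg1 hle1).trans (le_of_eq ?_)
      rw [integral_const_mul, integral_Ioi_rpow_of_lt (by linarith) one_pos, Real.one_rpow]
      rw [show -b - 1 + 1 = -b by ring, neg_div_neg_eq]
      ring
    have hsplit : ∫ t in Ioi (0 : ℝ), G t * t ^ (-1 - σ) =
        (∫ t in Ioc (0 : ℝ) 1, G t * t ^ (-1 - σ)) +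
          ((∫ t in Ioi (1 : ℝ), (G t + c) * t ^ (-1 - σ)) - c / σ) := by
      rw [← Ioc_union_Ioi_eq_Ioi (zero_le_one (α := ℝ)),
        setIntegral_union (Ioc_disjoint_Ioi le_rfl) measurableSet_Ioi hi0 hi3, ← hv2,
        ← integral_sub hi1 hi2, hfun]
    rw [Real.norm_eq_abs] at hn0 hn1
    rw [hsplit, show ∀ p q : ℝ, σ * (p + (q - c / σ)) - -c = σ * (p + q) by
      intro p q; field_simp; ring, abs_mul, abs_of_pos hσ]
    gcongr
    exact (abs_add_le _ _).trans (add_le_add hn0 hn1)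
  rw [tendsto_iff_norm_sub_tendsto_zero]
  have hlim : Tendsto (fun σ : ℝ => σ * (2 * C₀ / a + C₁ / b)) (nhdsWithin 0 (Ioi 0))
      (nhds 0) := by
    have : Tendsto (fun σ : ℝ => σ * (2 * C₀ / a + C₁ / b)) (nhds 0)
        (nhds (0 * (2 * C₀ / a + C₁ / b))) := tendsto_id.mul_const _
    rw [zero_mul] at this
    exact this.mono_left nhdsWithin_le_nhds
  refine squeeze_zero' (Eventually.of_forall fun _ => norm_nonneg _) ?_ hlim
  filter_upwards [Ioo_mem_nhdsGT (half_pos ha)] with σ hσ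
  exact key σ hσ

lemma tendsto_neg_one_sub_div_Gamma :
    Tendsto (fun σ : ℝ => -(1 - σ) / Real.Gamma (2 - σ)) (nhdsWithin 0 (Ioi 0)) (nhds (-1)) := by
  have hΓ : ContinuousAt Real.Gamma (2 - 0) :=
    (Real.differentiableAt_Gamma (fun m => by
      have : (0 : ℝ) ≤ m := m.cast_nonneg
      linarith)).continuousAt
  have h : ContinuousAt (fun σ : ℝ => -(1 - σ) / Real.Gamma (2 - σ)) 0 :=
    ContinuousAt.div (by fun_prop)
      (ContinuousAt.comp (g := Real.Gamma) (f := fun σ : ℝ => 2 - σ) hΓ (by fun_prop))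
      (by norm_num [Real.Gamma_two])
  have h2 := h.tendsto
  simp only [sub_zero, Real.Gamma_two, div_one] at h2
  exact h2.mono_left nhdsWithin_le_nhds

/-- Pointwise limit of `Δ_λ^σ u` as `σ → 0⁺`. -/
theorem limit_sigma_zero
    (lam α : ℝ) (hlam : 1 ≤ lam) (hα0 : 0 < α) (hα1 : α < 1)
    (u : ℝ → ℝ) (hbdd : ∃ M : ℝ, ∀ x ∈ Set.Ioi (0 : ℝ), |u x| ≤ M)
    (hu : MemHolderPlus α u)
    (huL : IntegrableOn (fun y => |u y| / (1 + y)) (Set.Ioi 0)) :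
    ∀ x : ℝ, 0 < x →
      Tendsto (fun σ : ℝ => 1 / gammaNeg σ *
          ∫ t in Set.Ioi (0 : ℝ), (heatSemigroup lam u t x - u x) * t ^ (-1 - σ))
        (nhdsWithin 0 (Set.Ioi 0)) (nhds (u x)) := by
  obtain ⟨M, hM⟩ := hbdd
  obtain ⟨huc, huH, -⟩ := hu
  intro x hx
  obtain ⟨C₀, hC₀⟩ := exists_heatSemigroup_sub_bound hlam hα0 hα1 huc hM huH hx
  obtain ⟨C₁, hC₁⟩ := exists_heatSemigroup_bound hlam huL hx
  have hlim := tendsto_mul_integral_rpow (G := fun t => heatSemigroup lam u t x - u x) (c := u x)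
    (half_pos hα0) one_half_pos
    ((aestronglyMeasurable_heatSemigroup huc).sub aestronglyMeasurable_const) hC₀
    (by simpa using hC₁)
  have h := tendsto_neg_one_sub_div_Gamma.mul hlim
  rw [neg_mul_neg, one_mul] at h
  refine h.congr fun σ => ?_
  rw [gammaNeg, one_div_div]
  ring
end
end
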